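/- arXiv:1907.04663 — 4 statements merged into one kernel-verified Lean document; each statement's English description precedes it below -/
import Mathlib

section
/- Assume dom f ≠ ∅. Then f is real-valued on P (i.e. f(x,z) ∈ ℝ for all (x,z) ∈ P) and f is Lipschitz continuous on P: there exists L ≥ 0 such that |f(x,z) − f(x',z')| ≤ L‖(x,z) − (x',z')‖ for all (x,z), (x',z') ∈ P. -/
open MeasureTheory Matrix Set Topology Filter

noncomputable section

/-- Feasible set of the lower level problem: `{ y | A y ≤ T x + z }`. -/
def LowerFeas {n m s : ℕ} (A : Matrix (Fin s) (Fin m) ℝ) (T : Matrix (Fin s) (Fin n) ℝ)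
    (x : Fin n → ℝ) (z : Fin s → ℝ) : Set (Fin m → ℝ) :=
  {y | A.mulVec y ≤ T.mulVec x + z}

/-- Lower level optimal solution set `Ψ(x,z) = Argmin { dᵀy | A y ≤ T x + z }`. -/
def Psi {n m s : ℕ} (d : Fin m → ℝ) (A : Matrix (Fin s) (Fin m) ℝ)
    (T : Matrix (Fin s) (Fin n) ℝ) (x : Fin n → ℝ) (z : Fin s → ℝ) : Set (Fin m → ℝ) :=
  {y | y ∈ LowerFeas A T x z ∧ ∀ y' ∈ LowerFeas A T x z, d ⬝ᵥ y ≤ d ⬝ᵥ y'}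

/-- `f(x,z) = cᵀx + inf { qᵀ y | y ∈ Ψ(x,z) }` with values in `ℝ ∪ {±∞}`
(the infimum over the empty set being `+∞`). -/
def fE {n m s : ℕ} (c : Fin n → ℝ) (q d : Fin m → ℝ) (A : Matrix (Fin s) (Fin m) ℝ)
    (T : Matrix (Fin s) (Fin n) ℝ) (x : Fin n → ℝ) (z : Fin s → ℝ) : EReal :=
  ((c ⬝ᵥ x : ℝ) : EReal) + sInf ((fun y => ((q ⬝ᵥ y : ℝ) : EReal)) '' Psi d A T x z)

/-- `P = { (x,z) | ∃ y, A y ≤ T x + z }`. -/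
def Pfeas {n m s : ℕ} (A : Matrix (Fin s) (Fin m) ℝ) (T : Matrix (Fin s) (Fin n) ℝ) :
    Set ((Fin n → ℝ) × (Fin s → ℝ)) :=
  {p | (LowerFeas A T p.1 p.2).Nonempty}

/-- `dom f = { (x,z) | f(x,z) ∈ ℝ }`. -/
def domf {n m s : ℕ} (c : Fin n → ℝ) (q d : Fin m → ℝ) (A : Matrix (Fin s) (Fin m) ℝ)
    (T : Matrix (Fin s) (Fin n) ℝ) : Set ((Fin n → ℝ) × (Fin s → ℝ)) :=
  {p | fE c q d A T p.1 p.2 ≠ ⊤ ∧ fE c q d A T p.1 p.2 ≠ ⊥}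

/-- Topological support of a Borel measure. -/
def msupport {s : ℕ} (μ : Measure (Fin s → ℝ)) : Set (Fin s → ℝ) :=
  {z | ∀ U : Set (Fin s → ℝ), IsOpen U → z ∈ U → μ U ≠ 0}

/-- `P_Z = { x | (x,z) ∈ P for all z ∈ supp μ_Z }`. -/
def PZSet {n m s : ℕ} (A : Matrix (Fin s) (Fin m) ℝ) (T : Matrix (Fin s) (Fin n) ℝ)
    (μZ : Measure (Fin s → ℝ)) : Set (Fin n → ℝ) :=
  {x | ∀ z ∈ msupport μZ, (x, z) ∈ Pfeas A T}

/-!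
The right-hand side `b = T x + z` is linear in `(x, z)`, so it suffices to study the dependence on
`b`. The set `{(b, t) | ∃ y, A y ≤ b ∧ d y ≤ t}` is the sum of the nonnegative cone and the range of
`(A, d)`. A polyhedral cone (`DualFG .id`) stays polyhedral when a ray is added to it, by
Fourier–Motzkin elimination of the coefficient of the ray, hence also when a finitely generated cone
is added. Solving the resulting homogeneous inequalities for `t` shows that a linear program which
is bounded for one feasible `b` attains its value for every feasible `b`, and that this value is a
maximum of finitely many linear functionals of `b`; in particular it is Lipschitz.

If `δ b` is the value of the lower level problem, then `Ψ = {y | A y ≤ b ∧ d y ≤ δ b}` is the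
feasible set of a linear program with right-hand side `(b, δ b)`. Applying the same result to the
objective `q` exhibits the upper level value as a Lipschitz function of `(b, δ b)`.
-/

open PointedCone
open scoped NNReal

section PolyhedralCone

variable {𝕜 V : Type*} [Field 𝕜] [LinearOrder 𝕜] [IsStrictOrderedRing 𝕜]
  [AddCommGroup V] [Module 𝕜 V]

lemma exists_nonneg_forall_mul_le_iff {ι : Type*} (s : Finset ι) (a r : ι → 𝕜) :
    (∃ t, 0 ≤ t ∧ ∀ i ∈ s, r i * t ≤ a i) ↔
      (∀ i ∈ s, 0 ≤ r i → 0 ≤ a i) ∧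
        ∀ i ∈ s, 0 < r i → ∀ j ∈ s, r j < 0 → 0 ≤ r i * a j - r j * a i := by
  classical
  constructor
  · rintro ⟨t, ht, h⟩
    refine ⟨fun i hi hri => (mul_nonneg hri ht).trans (h i hi), fun i hi hri j hj hrj => ?_⟩
    linarith [mul_le_mul_of_nonneg_left (h j hj) hri.le,
      mul_le_mul_of_nonpos_left (h i hi) hrj.le]
  · rintro ⟨hnonneg, hcross⟩
    let bounds : Finset 𝕜 := insert 0 ({j ∈ s | r j < 0}.image fun j => a j / r j)
    let t := bounds.max' (Finset.insert_nonempty _ _)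
    refine ⟨t, bounds.le_max' 0 (Finset.mem_insert_self _ _), fun i hi => ?_⟩
    rcases lt_trichotomy (r i) 0 with hneg | hzero | hpos
    · have : a i / r i ≤ t := bounds.le_max' _ <| Finset.mem_insert_of_mem <|
        Finset.mem_image_of_mem (fun j => a j / r j) (Finset.mem_filter.2 ⟨hi, hneg⟩)
      rwa [div_le_iff_of_neg' hneg] at this
    · simpa [hzero] using hnonneg i hi hzero.ge
    · suffices t ≤ a i / r i by rwa [le_div_iff₀' hpos] at this
      refine Finset.max'_le _ _ _ fun u hu => ?_
      rcases Finset.mem_insert.1 hu with rfl | hu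
      · exact div_nonneg (hnonneg i hi hpos.le) hpos.le
      · obtain ⟨j, hj, rfl⟩ := Finset.mem_image.1 hu
        obtain ⟨hjs, hneg⟩ := Finset.mem_filter.1 hj
        rw [div_le_iff_of_neg hneg, div_mul_eq_mul_div, div_le_iff₀ hpos]
        linarith [hcross i hi hpos j hjs hneg]

lemma mem_sup_hull_singleton {C : PointedCone 𝕜 V} {e v : V} :
    v ∈ C ⊔ hull 𝕜 {e} ↔ ∃ t : 𝕜, 0 ≤ t ∧ v - t • e ∈ C := by
  simp only [Submodule.mem_sup, Submodule.mem_span_singleton]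
  constructor
  · rintro ⟨w, hw, _, ⟨t, rfl⟩, rfl⟩
    exact ⟨t, t.2, by simpa [Nonneg.mk_smul] using hw⟩
  · rintro ⟨t, ht, hv⟩
    exact ⟨v - t • e, hv, _, ⟨⟨t, ht⟩, rfl⟩, sub_add_cancel _ _⟩

lemma dualFG_sup_hull_singleton {C : PointedCone 𝕜 V} (hC : C.DualFG .id) (e : V) :
    (C ⊔ hull 𝕜 {e}).DualFG .id := by
  classical
  obtain ⟨s, rfl⟩ := hC
  refine ⟨{g ∈ s | 0 ≤ g e} ∪ Finset.image₂ (fun g h => g e • h - h e • g)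
    {g ∈ s | 0 < g e} {h ∈ s | h e < 0}, ?_⟩
  ext v
  have hray : v ∈ dual .id (s : Set (Module.Dual 𝕜 V)) ⊔ hull 𝕜 {e} ↔
      ∃ t, 0 ≤ t ∧ ∀ g ∈ s, g e * t ≤ g v := by
    simp [mem_sup_hull_singleton, mul_comm]
  rw [hray, exists_nonneg_forall_mul_le_iff s (fun g => g v) fun g => g e]
  simp only [mem_dual, Finset.coe_union, Set.mem_union, Finset.mem_coe, Finset.mem_filter,
    Finset.mem_image₂, or_imp, forall_and, LinearMap.id_apply, and_imp]
  refine and_congr_right fun _ => ⟨fun h g hg hpos k hk hneg => ?_, ?_⟩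
  · exact h _ ⟨g, ⟨hg, hpos⟩, k, ⟨hk, hneg⟩, rfl⟩
  · rintro h _ ⟨g, ⟨hg, hpos⟩, k, ⟨hk, hneg⟩, rfl⟩
    exact h g hg hpos k hk hneg

theorem dualFG_sup_of_fg {C D : PointedCone 𝕜 V} (hC : C.DualFG .id) (hD : D.FG) :
    (C ⊔ D).DualFG .id := by
  induction D, hD using Submodule.fg_induction generalizing C with
  | singleton e => exact dualFG_sup_hull_singleton hC e
  | sup D₁ D₂ _ _ ih₁ ih₂ =>
    rw [← sup_assoc]
    exact ih₂ (ih₁ hC)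

lemma module_finite_nonneg : Module.Finite {c : 𝕜 // 0 ≤ c} 𝕜 := by
  refine ⟨⟨{1, -1}, eq_top_iff.2 fun a _ => ?_⟩⟩
  rw [Finset.coe_pair, Submodule.mem_span_pair]
  refine ⟨⟨a⁺, posPart_nonneg a⟩, ⟨a⁻, negPart_nonneg a⟩, ?_⟩
  simp [Nonneg.mk_smul, ← sub_eq_add_neg]

theorem dualFG_sup_ofSubmodule {C : PointedCone 𝕜 V} (hC : C.DualFG .id) {S : Submodule 𝕜 V}
    (hS : S.FG) : (C ⊔ ofSubmodule S).DualFG .id :=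
  have := module_finite_nonneg (𝕜 := 𝕜)
  dualFG_sup_of_fg hC hS.restrictScalars

lemma dualFG_positive_self : (positive 𝕜 𝕜).DualFG .id :=
  ⟨{LinearMap.id}, by ext; simp⟩

lemma dualFG_positive_pi {ι : Type*} [Finite ι] : (positive 𝕜 (ι → 𝕜)).DualFG .id := by
  classical
  cases nonempty_fintype ι
  exact ⟨Finset.univ.image LinearMap.proj, by ext; simp [Pi.le_def]⟩

theorem exists_finset_mem_iff_forall_le {C : PointedCone 𝕜 (V × 𝕜)} (hC : C.DualFG .id)
    (hup : (0, 1) ∈ C) {b₀ : V} {t₀ t₁ : 𝕜} (ht₀ : (b₀, t₀) ∈ C) (ht₁ : (b₀, t₁) ∉ C) :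
    ∃ S : Finset (Module.Dual 𝕜 V), S.Nonempty ∧
      ∀ b t t', (b, t) ∈ C → ((b, t') ∈ C ↔ ∀ l ∈ S, l b ≤ t') := by
  classical
  obtain ⟨s, rfl⟩ := hC
  have happly (g : V × 𝕜 →ₗ[𝕜] 𝕜) (b : V) (t : 𝕜) : g (b, t) = g (b, 0) + t * g (0, 1) := by
    rw [← smul_eq_mul, ← map_smul, ← map_add]
    simp
  have hslope (g) (hg : g ∈ s) : 0 ≤ g (0, 1) := hup hg
  have hvertical {b t t'} (hbt : (b, t) ∈ dual .id (s : Set (Module.Dual 𝕜 (V × 𝕜)))) {g}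
      (hg : g ∈ s) (hg0 : g (0, 1) = 0) : 0 ≤ g (b, t') := by
    have : 0 ≤ g (b, t) := hbt hg
    rwa [happly, hg0, mul_zero] at this ⊢
  let bound (g : V × 𝕜 →ₗ[𝕜] 𝕜) : V →ₗ[𝕜] 𝕜 := -(g (0, 1))⁻¹ • g ∘ₗ LinearMap.inl 𝕜 V 𝕜
  have hbound {g} (hg : 0 < g (0, 1)) (b t) : bound g b ≤ t ↔ 0 ≤ g (b, t) := by
    have : bound g b = -g (b, 0) / g (0, 1) := by simp [bound, div_eq_inv_mul]
    rw [this, div_le_iff₀ hg, happly g b t, neg_le_iff_add_nonneg']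
  refine ⟨{g ∈ s | 0 < g (0, 1)}.image bound, ?_, fun b t t' hbt => ?_⟩
  · by_contra! hempty
    rw [Finset.image_eq_empty, Finset.filter_eq_empty_iff] at hempty
    exact ht₁ fun g hg => hvertical ht₀ hg (le_antisymm (not_lt.1 (hempty hg)) (hslope g hg))
  · simp only [Finset.forall_mem_image, Finset.mem_filter, and_imp]
    refine ⟨fun h g hg hpos => (hbound hpos b t').2 (h hg), fun h g hg => ?_⟩
    rcases (hslope g hg).eq_or_lt with hzero | hpos
    · exact hvertical hbt hg hzero.symm
    · exact (hbound hpos b t').1 (h hg hpos)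

variable [PartialOrder V] [IsOrderedAddMonoid V] [PosSMulMono 𝕜 V]

lemma dualFG_positive_prod {V' : Type*} [AddCommGroup V'] [Module 𝕜 V'] [PartialOrder V']
    [IsOrderedAddMonoid V'] [PosSMulMono 𝕜 V']
    (hV : (positive 𝕜 V).DualFG .id) (hV' : (positive 𝕜 V').DualFG .id) :
    (positive 𝕜 (V × V')).DualFG .id := by
  classical
  obtain ⟨s, hs⟩ := hV
  obtain ⟨s', hs'⟩ := hV'
  refine ⟨s.image (· ∘ₗ LinearMap.fst 𝕜 V V') ∪ s'.image (· ∘ₗ LinearMap.snd 𝕜 V V'), ?_⟩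
  ext v
  have hfst : (∀ g ∈ s, 0 ≤ g v.1) ↔ 0 ≤ v.1 := SetLike.ext_iff.1 hs v.1
  have hsnd : (∀ g ∈ s', 0 ≤ g v.2) ↔ 0 ≤ v.2 := SetLike.ext_iff.1 hs' v.2
  simp [or_imp, forall_and, hfst, hsnd, Prod.le_def]

lemma mem_positive_sup_range {E : Type*} [AddCommGroup E] [Module 𝕜 E] {A : E →ₗ[𝕜] V} {v : V} :
    v ∈ positive 𝕜 V ⊔ ofSubmodule (LinearMap.range A) ↔ ∃ y, A y ≤ v := by
  simp only [Submodule.mem_sup, mem_positive, mem_ofSubmodule_iff, LinearMap.mem_range]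
  constructor
  · rintro ⟨u, hu, _, ⟨y, rfl⟩, rfl⟩
    exact ⟨y, le_add_of_nonneg_left hu⟩
  · rintro ⟨y, hy⟩
    exact ⟨v - A y, sub_nonneg.2 hy, A y, ⟨y, rfl⟩, sub_add_cancel _ _⟩

end PolyhedralCone

section LinearProgram

lemma exists_lipschitzWith_sup' {X ι : Type*} [PseudoEMetricSpace X] {s : Finset ι}
    (hs : s.Nonempty) {f : ι → X → ℝ} (hf : ∀ i ∈ s, ∃ K : ℝ≥0, LipschitzWith K (f i)) :
    ∃ K : ℝ≥0, LipschitzWith K (s.sup' hs f) :=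
  Finset.sup'_induction hs f (p := fun g => ∃ K : ℝ≥0, LipschitzWith K g)
    (fun _ ⟨K, hK⟩ _ ⟨K', hK'⟩ => ⟨max K K', hK.max hK'⟩) hf

variable {W : Type*} [NormedAddCommGroup W] [NormedSpace ℝ W] [FiniteDimensional ℝ W]

theorem exists_lipschitzWith_mem_iff_le {C : PointedCone ℝ (W × ℝ)} (hC : C.DualFG .id)
    (hup : (0, 1) ∈ C) {b₀ : W} {t₀ t₁ : ℝ} (ht₀ : (b₀, t₀) ∈ C) (ht₁ : (b₀, t₁) ∉ C) :
    ∃ (φ : W → ℝ) (K : ℝ≥0), LipschitzWith K φ ∧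
      ∀ b t t', (b, t) ∈ C → ((b, t') ∈ C ↔ φ b ≤ t') := by
  obtain ⟨S, hS, hmem⟩ := exists_finset_mem_iff_forall_le hC hup ht₀ ht₁
  obtain ⟨K, hK⟩ := exists_lipschitzWith_sup' hS (f := fun l => l)
    fun l _ => ⟨_, l.toContinuousLinearMap.lipschitz⟩
  refine ⟨_, K, hK, fun b t t' hbt => ?_⟩
  rw [hmem b t t' hbt, Finset.sup'_apply, Finset.sup'_le_iff]

variable [PartialOrder W] [IsOrderedAddMonoid W] [PosSMulMono ℝ W]
  {E : Type*} [AddCommGroup E] [Module ℝ E]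

theorem exists_lipschitzWith_isLeast_image (hW : (positive ℝ W).DualFG .id) (A : E →ₗ[ℝ] W)
    (d : E →ₗ[ℝ] ℝ) {b₀ : W} (hne : {y | A y ≤ b₀}.Nonempty)
    (hbdd : BddBelow (d '' {y | A y ≤ b₀})) :
    ∃ (φ : W → ℝ) (K : ℝ≥0), LipschitzWith K φ ∧
      ∀ b, {y | A y ≤ b}.Nonempty → IsLeast (d '' {y | A y ≤ b}) (φ b) := by
  let epi : PointedCone ℝ (W × ℝ) := positive ℝ _ ⊔ ofSubmodule (LinearMap.range (A.prod d))
  have hepi {b t} : (b, t) ∈ epi ↔ ∃ y, A y ≤ b ∧ d y ≤ t := mem_positive_sup_range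
  have hpoly : epi.DualFG .id :=
    dualFG_sup_ofSubmodule (dualFG_positive_prod hW dualFG_positive_self)
      (IsNoetherian.noetherian _)
  obtain ⟨y₀, hy₀⟩ := hne
  obtain ⟨l, hl⟩ := hbdd
  have hlow : (b₀, l - 1) ∉ epi := by
    rw [hepi]
    rintro ⟨y, hy, hdy⟩
    linarith [hl ⟨y, hy, rfl⟩]
  obtain ⟨φ, K, hK, hφ⟩ := exists_lipschitzWith_mem_iff_le hpoly (hepi.2 ⟨0, by simp⟩)
    (hepi.2 ⟨y₀, hy₀, le_rfl⟩) hlow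
  refine ⟨φ, K, hK, fun b ⟨y, hy⟩ => ?_⟩
  have hvalue {t} : (∃ y, A y ≤ b ∧ d y ≤ t) ↔ φ b ≤ t :=
    hepi.symm.trans (hφ b (d y) t (hepi.2 ⟨y, hy, le_rfl⟩))
  have hlb : φ b ∈ lowerBounds (d '' {y | A y ≤ b}) := by
    rintro _ ⟨y', hy', rfl⟩
    exact hvalue.1 ⟨y', hy', le_rfl⟩
  obtain ⟨y', hy', hdy'⟩ := hvalue.2 le_rfl
  exact ⟨⟨y', hy', hdy'.antisymm (hlb ⟨y', hy', rfl⟩)⟩, hlb⟩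

end LinearProgram

section Bilevel

variable {W E : Type*} [AddCommGroup E] [Module ℝ E]

section ArgminAndValue

variable [AddCommGroup W] [Module ℝ W] [LE W]

/-- The optimal solution set of the linear program of minimizing `d` subject to `A y ≤ b`. -/
def argmin (d : E →ₗ[ℝ] ℝ) (A : E →ₗ[ℝ] W) (b : W) : Set E :=
  {y | A y ≤ b ∧ ∀ y', A y' ≤ b → d y ≤ d y'}

/-- The optimistic value of a bilevel program: the infimum of the upper level objective `q` over
the lower level solution set. As in `fE`, the value is `⊤` if there is no lower level solution. -/
def optimisticValue (q d : E →ₗ[ℝ] ℝ) (A : E →ₗ[ℝ] W) (b : W) : EReal :=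
  sInf ((fun y => ((q y : ℝ) : EReal)) '' argmin d A b)

variable {q d : E →ₗ[ℝ] ℝ} {A : E →ₗ[ℝ] W} {b : W}

lemma argmin_eq_setOf_prod_le {t : ℝ} (ht : IsLeast (d '' {y | A y ≤ b}) t) :
    argmin d A b = {y | A.prod d y ≤ (b, t)} := by
  obtain ⟨⟨w, hw, rfl⟩, hlb⟩ := ht
  ext y
  exact ⟨fun ⟨hy, hmin⟩ => ⟨hy, hmin w hw⟩,
    fun ⟨hy, hle⟩ => ⟨hy, fun y' hy' => hle.trans (hlb ⟨y', hy', rfl⟩)⟩⟩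

lemma argmin_nonempty_of_optimisticValue_ne_top (h : optimisticValue q d A b ≠ ⊤) :
    (argmin d A b).Nonempty := by
  contrapose! h
  simp [optimisticValue, h]

lemma bddBelow_image_argmin_of_optimisticValue_ne_bot (h : optimisticValue q d A b ≠ ⊥) :
    BddBelow (q '' argmin d A b) := by
  contrapose! h
  refine (EReal.eq_bot_iff_forall_lt _).2 fun t => ?_
  obtain ⟨_, ⟨y, hy, rfl⟩, hlt⟩ := not_bddBelow_iff.1 h t
  exact (sInf_le (mem_image_of_mem _ hy)).trans_lt (EReal.coe_lt_coe_iff.2 hlt)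

lemma optimisticValue_eq_coe {v : ℝ} (h : IsLeast (q '' argmin d A b) v) :
    optimisticValue q d A b = v := by
  have := EReal.coe_strictMono.monotone.map_isLeast h
  rw [Set.image_image] at this
  exact this.isGLB.sInf_eq

end ArgminAndValue

variable [NormedAddCommGroup W] [NormedSpace ℝ W] [FiniteDimensional ℝ W] [PartialOrder W]
  [IsOrderedAddMonoid W] [PosSMulMono ℝ W] {q d : E →ₗ[ℝ] ℝ} {A : E →ₗ[ℝ] W} {b₀ : W}

theorem exists_lipschitzWith_isLeast_image_argmin (hW : (positive ℝ W).DualFG .id)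
    (hne : (argmin d A b₀).Nonempty) (hbdd : BddBelow (q '' argmin d A b₀)) :
    ∃ (φ : W → ℝ) (K : ℝ≥0), LipschitzWith K φ ∧
      ∀ b, {y | A y ≤ b}.Nonempty → IsLeast (q '' argmin d A b) (φ b) := by
  have ⟨y₀, hy₀, hmin⟩ := hne
  obtain ⟨δ, K, hK, hδ⟩ := exists_lipschitzWith_isLeast_image hW A d ⟨y₀, hy₀⟩
    ⟨d y₀, by rintro _ ⟨y, hy, rfl⟩; exact hmin y hy⟩
  rw [argmin_eq_setOf_prod_le (hδ b₀ ⟨y₀, hy₀⟩)] at hne hbdd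
  obtain ⟨ψ, K', hK', hψ⟩ := exists_lipschitzWith_isLeast_image
    (dualFG_positive_prod hW dualFG_positive_self) (A.prod d) q hne hbdd
  refine ⟨_, _, hK'.comp (LipschitzWith.id.prodMk hK), fun b hb => ?_⟩
  obtain ⟨w, hw, hdw⟩ := (hδ b hb).1
  rw [argmin_eq_setOf_prod_le (hδ b hb)]
  exact hψ (b, δ b) ⟨w, hw, hdw.le⟩

theorem exists_lipschitzWith_optimisticValue_eq_coe (hW : (positive ℝ W).DualFG .id)
    (htop : optimisticValue q d A b₀ ≠ ⊤) (hbot : optimisticValue q d A b₀ ≠ ⊥) :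
    ∃ (φ : W → ℝ) (K : ℝ≥0), LipschitzWith K φ ∧
      ∀ b, {y | A y ≤ b}.Nonempty → optimisticValue q d A b = φ b := by
  obtain ⟨φ, K, hK, hφ⟩ := exists_lipschitzWith_isLeast_image_argmin hW
    (argmin_nonempty_of_optimisticValue_ne_top htop)
    (bddBelow_image_argmin_of_optimisticValue_ne_bot hbot)
  exact ⟨φ, K, hK, fun b hb => optimisticValue_eq_coe (hφ b hb)⟩

variable {X : Type*} [SeminormedAddCommGroup X] [NormedSpace ℝ X]

/-- The coordinate-free form of `fE`, as a function of the pair `p = (x, z)`. -/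
def bilevelObjective (c : X →L[ℝ] ℝ) (q d : E →ₗ[ℝ] ℝ) (A : E →ₗ[ℝ] W) (T : X →L[ℝ] W)
    (p : X × W) : EReal :=
  (c p.1 : EReal) + optimisticValue q d A (T p.1 + p.2)

theorem lipschitz_of_f_on_P_general (hW : (positive ℝ W).DualFG .id) (c : X →L[ℝ] ℝ)
    (q d : E →ₗ[ℝ] ℝ) (A : E →ₗ[ℝ] W) (T : X →L[ℝ] W)
    (hdom : ∃ p, bilevelObjective c q d A T p ≠ ⊤ ∧ bilevelObjective c q d A T p ≠ ⊥) :
    (∀ p ∈ {p : X × W | ∃ y, A y ≤ T p.1 + p.2},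
      bilevelObjective c q d A T p ≠ ⊤ ∧ bilevelObjective c q d A T p ≠ ⊥) ∧
    ∃ K : ℝ≥0, LipschitzOnWith K (fun p => (bilevelObjective c q d A T p).toReal)
      {p | ∃ y, A y ≤ T p.1 + p.2} := by
  obtain ⟨p₀, htop, hbot⟩ := hdom
  obtain ⟨φ, K, hK, hφ⟩ := exists_lipschitzWith_optimisticValue_eq_coe (q := q) (d := d) (A := A)
    (b₀ := T p₀.1 + p₀.2) hW (fun h => htop (by simp [bilevelObjective, h]))
    (fun h => hbot (by simp [bilevelObjective, h]))
  have hvalue {p : X × W} (hp : ∃ y, A y ≤ T p.1 + p.2) :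
      bilevelObjective c q d A T p = ↑(c p.1 + φ (T p.1 + p.2)) := by
    rw [bilevelObjective, hφ _ hp, EReal.coe_add]
  have hlip : LipschitzWith _ fun p : X × W => c p.1 + φ (T p.1 + p.2) :=
    (c.lipschitz.comp .prod_fst).add (hK.comp ((T.lipschitz.comp .prod_fst).add .prod_snd))
  exact ⟨fun p hp => hvalue hp ▸ ⟨EReal.coe_ne_top _, EReal.coe_ne_bot _⟩, _,
    fun p hp p' hp' => by
      simpa only [hvalue hp, hvalue hp', EReal.toReal_coe] using hlip p p'⟩

end Bilevel

theorem lipschitz_of_f_on_P {n m s : ℕ} (c : Fin n → ℝ) (q d : Fin m → ℝ)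
    (A : Matrix (Fin s) (Fin m) ℝ) (T : Matrix (Fin s) (Fin n) ℝ)
    (hdom : (domf c q d A T).Nonempty) :
    (∀ p ∈ Pfeas A T, fE c q d A T p.1 p.2 ≠ ⊤ ∧ fE c q d A T p.1 p.2 ≠ ⊥) ∧
    ∃ L : ℝ, 0 ≤ L ∧ ∀ p ∈ Pfeas A T, ∀ p' ∈ Pfeas A T,
      |(fE c q d A T p.1 p.2).toReal - (fE c q d A T p'.1 p'.2).toReal| ≤ L * ‖p - p'‖ := by
  obtain ⟨hreal, K, hK⟩ := lipschitz_of_f_on_P_general dualFG_positive_pi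
    (dotProductBilin ℝ ℝ c).toContinuousLinearMap (dotProductBilin ℝ ℝ q) (dotProductBilin ℝ ℝ d)
    A.mulVecLin T.mulVecLin.toContinuousLinearMap hdom
  exact ⟨hreal, K, K.coe_nonneg, fun p hp p' hp' =>
    (hK.dist_le_mul p hp p' hp').trans_eq (congrArg _ (dist_eq_norm p p'))⟩

end
end

section
/- dom f ≠ ∅ holds if and only if there exists (x,z) ∈ ℝⁿ × ℝˢ such that (a) { y ∈ ℝᵐ : Ay ≤ Tx + z } is nonempty, (b) there exists u ∈ ℝˢ with Aᵀu = d and u ≤ 0 (componentwise), and (c) the function y ↦ qᵀy is bounded from below on Ψ(x,z). Moreover, under these conditions the infimum inf { qᵀy : y ∈ Ψ(x',z') } is attained for every (x',z') ∈ P. -/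
/-!
A linear functional attains its minimum on a nonempty polyhedron `{y | Ay ≤ b}` as soon as it is
nonnegative on the recession cone `{w | Aw ≤ 0}`, and it must be nonnegative there if it is bounded
below. Hence `Ψ(x,z)` is nonempty iff the feasible set is and `d ≥ 0` on the recession cone, which
is the existence of `u` by Farkas' lemma. A nonempty `Ψ(x,z)` is again a polyhedron, with the extra
constraint `dᵀy ≤ min`; its recession cone `{w | Aw ≤ 0, dᵀw ≤ 0}` does not depend on `(x,z)`, so
boundedness of `qᵀy` at one parameter gives attainment at all of them.
-/

open MeasureTheory Matrix Set Topology Filter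

noncomputable section

section Farkas

variable {𝕜 V ι : Type*} [Field 𝕜] [AddCommGroup V] [Module 𝕜 V]

-- When `g x₀ ≠ 0`, this is `f` composed with the projection onto `ker g` along `x₀`.
theorem sub_smul_apply_eq_apply_sub_smul (f g : Module.Dual 𝕜 V) (x₀ x : V) :
    (f - (f x₀ / g x₀) • g) x = f (x - (g x / g x₀) • x₀) := by
  simp only [LinearMap.sub_apply, LinearMap.smul_apply, map_sub, map_smul, smul_eq_mul]
  ring

variable [LinearOrder 𝕜] [IsStrictOrderedRing 𝕜]

theorem nonneg_of_mem_hull_range {a : ι → Module.Dual 𝕜 V} {b : Module.Dual 𝕜 V}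
    (hb : b ∈ PointedCone.hull 𝕜 (range a)) {x : V} (hx : ∀ i, 0 ≤ a i x) : 0 ≤ b x := by
  induction hb using Submodule.span_induction with
  | mem f hf =>
    obtain ⟨i, rfl⟩ := hf
    exact hx i
  | zero => exact le_rfl
  | add f g _ _ hf hg => exact add_nonneg hf hg
  | smul r f _ hf => exact mul_nonneg r.2 hf

theorem mem_hull_range_option_of_sub_smul_mem {a : Option ι → Module.Dual 𝕜 V}
    {b : Module.Dual 𝕜 V} {x₀ : V} (hsome : ∀ i, 0 ≤ a (some i) x₀) (hnone : a none x₀ < 0)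
    (hbx₀ : b x₀ < 0)
    (hb : b - (b x₀ / a none x₀) • a none ∈
      PointedCone.hull 𝕜 (range fun i ↦ a (some i) - (a (some i) x₀ / a none x₀) • a none)) :
    b ∈ PointedCone.hull 𝕜 (range a) := by
  set C := PointedCone.hull 𝕜 (range a)
  have ha (o) : a o ∈ C := PointedCone.subset_hull (mem_range_self o)
  have hle : PointedCone.hull 𝕜
      (range fun i ↦ a (some i) - (a (some i) x₀ / a none x₀) • a none) ≤ C := by
    refine Submodule.span_le.2 (range_subset_iff.2 fun i ↦ ?_)
    have hcoeff : 0 ≤ -(a (some i) x₀ / a none x₀) :=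
      neg_nonneg.2 (div_nonpos_of_nonneg_of_nonpos (hsome i) hnone.le)
    rw [sub_eq_add_neg, ← neg_smul (a (some i) x₀ / a none x₀) (a none)]
    exact add_mem (ha _) (C.smul_mem hcoeff (ha none))
  rw [← sub_add_cancel b ((b x₀ / a none x₀) • a none)]
  exact add_mem (hle hb) (C.smul_mem (div_nonneg_of_nonpos hbx₀.le hnone.le) (ha none))

/-- **Farkas' lemma**, by elimination: if the inequality `0 ≤ a none x` cannot be dropped, some `x₀`
violates it and `0 ≤ b x₀` but no other, and projecting along `x₀` onto the kernel of `a none`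
removes it. -/
theorem mem_hull_range_iff_forall_nonneg [Finite ι] {a : ι → Module.Dual 𝕜 V}
    {b : Module.Dual 𝕜 V} :
    b ∈ PointedCone.hull 𝕜 (range a) ↔ ∀ x, (∀ i, 0 ≤ a i x) → 0 ≤ b x := by
  refine ⟨fun hb _ ↦ nonneg_of_mem_hull_range hb, fun h ↦ ?_⟩
  induction ι using Finite.induction_empty_option generalizing b with
  | of_equiv e ih =>
    rw [← e.surjective.range_comp a]
    exact ih fun x hx ↦ h x (e.surjective.forall.2 hx)
  | h_empty =>
    have hb : b = 0 := LinearMap.ext fun x ↦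
      le_antisymm (by simpa using h (-x) nofun) (h x nofun)
    exact hb ▸ zero_mem _
  | h_option ih =>
    by_cases hsome : ∀ x, (∀ i, 0 ≤ a (some i) x) → 0 ≤ b x
    · exact Submodule.span_mono (range_comp_subset_range some a) (ih hsome)
    push Not at hsome
    obtain ⟨x₀, hx₀, hbx₀⟩ := hsome
    have hnone : a none x₀ < 0 := by
      by_contra! hnone
      exact hbx₀.not_ge (h x₀ (Option.forall.2 ⟨hnone, hx₀⟩))
    refine mem_hull_range_option_of_sub_smul_mem hx₀ hnone hbx₀ (ih fun x hx ↦ ?_)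
    simp only [sub_smul_apply_eq_apply_sub_smul] at hx ⊢
    refine h _ (Option.forall.2 ⟨?_, hx⟩)
    rw [map_sub, map_smul, smul_eq_mul, div_mul_cancel₀ _ hnone.ne, sub_self]

theorem mem_hull_range_iff_exists_nonneg [Fintype ι] {v : ι → V} {x : V} :
    x ∈ PointedCone.hull 𝕜 (range v) ↔ ∃ c : ι → 𝕜, 0 ≤ c ∧ ∑ i, c i • v i = x := by
  rw [Submodule.mem_span_range_iff_exists_fun]
  exact ⟨fun ⟨c, hc⟩ ↦ ⟨fun i ↦ c i, fun i ↦ (c i).2, hc⟩,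
    fun ⟨c, hc₀, hc⟩ ↦ ⟨fun i ↦ ⟨c i, hc₀ i⟩, hc⟩⟩

theorem exists_transpose_mulVec_eq_nonpos_iff {κ : Type*} [Fintype ι] [Fintype κ]
    {A : Matrix ι κ 𝕜} {d : κ → 𝕜} :
    (∃ u : ι → 𝕜, Aᵀ *ᵥ u = d ∧ u ≤ 0) ↔ ∀ w, A *ᵥ w ≤ 0 → 0 ≤ d ⬝ᵥ w := by
  have hsum (u : ι → 𝕜) : ∑ i, (-u) i • -dotProductBilin 𝕜 𝕜 (A i) =
      dotProductBilin 𝕜 𝕜 (Aᵀ *ᵥ u) := by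
    rw [mulVec_eq_sum, map_sum]
    exact Finset.sum_congr rfl fun i _ ↦ by ext; simp
  calc (∃ u : ι → 𝕜, Aᵀ *ᵥ u = d ∧ u ≤ 0)
    _ ↔ ∃ c : ι → 𝕜, 0 ≤ c ∧
        ∑ i, c i • -dotProductBilin 𝕜 𝕜 (A i) = dotProductBilin 𝕜 𝕜 d := by
      refine (Equiv.neg (ι → 𝕜)).exists_congr fun u ↦ ?_
      rw [Equiv.neg_apply, neg_nonneg, hsum, and_comm, and_congr_right_iff]
      exact fun _ ↦ ⟨congrArg _, fun h ↦ dotProduct_eq _ _ (LinearMap.congr_fun h)⟩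
    _ ↔ dotProductBilin 𝕜 𝕜 d ∈ PointedCone.hull 𝕜 (range fun i ↦ -dotProductBilin 𝕜 𝕜 (A i)) :=
      mem_hull_range_iff_exists_nonneg.symm
    _ ↔ ∀ w, (∀ i, 0 ≤ -(A i ⬝ᵥ w)) → 0 ≤ d ⬝ᵥ w := mem_hull_range_iff_forall_nonneg
    _ ↔ ∀ w, A *ᵥ w ≤ 0 → 0 ≤ d ⬝ᵥ w := by
      simp only [neg_nonneg]
      rfl

end Farkas

section Polyhedron

variable {𝕜 V ι : Type*} [Field 𝕜] [LinearOrder 𝕜] [AddCommGroup V] [Module 𝕜 V]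

/-- The polyhedron `{y | ∀ i, a i y ≤ b i}`. The recession cone of a nonempty one is
`polyhedron a 0`. -/
def polyhedron (a : ι → Module.Dual 𝕜 V) (b : ι → 𝕜) : Set V :=
  {y | ∀ i, a i y ≤ b i}

/-- The set of minimizers of `f` on `s`. -/
def argminOn {α β : Type*} [Preorder β] (f : α → β) (s : Set α) : Set α :=
  {y | y ∈ s ∧ IsMinOn f s y}

theorem polyhedron_comp_equiv {κ : Type*} (e : κ ≃ ι) (a : ι → Module.Dual 𝕜 V) (b : ι → 𝕜) :
    polyhedron (a ∘ e) (b ∘ e) = polyhedron a b :=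
  Set.ext fun y ↦ (e.surjective.forall (p := fun i ↦ a i y ≤ b i)).symm

theorem mem_polyhedron_option {a : Option ι → Module.Dual 𝕜 V} {b : Option ι → 𝕜} {y : V} :
    y ∈ polyhedron a b ↔ a none y ≤ b none ∧ y ∈ polyhedron (a ∘ some) (b ∘ some) :=
  Option.forall

theorem argminOn_polyhedron_eq {a : ι → Module.Dual 𝕜 V} {b : ι → 𝕜} {f : Module.Dual 𝕜 V}
    {y₀ : V} (hy₀ : y₀ ∈ argminOn f (polyhedron a b)) :
    argminOn f (polyhedron a b) = polyhedron (Option.elim · f a) (Option.elim · (f y₀) b) := by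
  ext y
  rw [mem_polyhedron_option]
  exact ⟨fun hy ↦ ⟨hy.2 hy₀.1, hy.1⟩, fun hy ↦ ⟨hy.2, fun y' hy' ↦ hy.1.trans (hy₀.2 hy')⟩⟩

variable [IsStrictOrderedRing 𝕜]

theorem convex_polyhedron (a : ι → Module.Dual 𝕜 V) (b : ι → 𝕜) : Convex 𝕜 (polyhedron a b) := by
  rw [polyhedron, ofPred_forall]
  exact convex_iInter fun i ↦ convex_halfSpace_le (a i).isLinear (b i)

theorem add_mem_polyhedron_iff {a : ι → Module.Dual 𝕜 V} {b : ι → 𝕜} {y w : V} :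
    y + w ∈ polyhedron a b ↔ w ∈ polyhedron a (fun i ↦ b i - a i y) :=
  forall_congr' fun i ↦ by rw [map_add, le_sub_iff_add_le']

theorem add_smul_mem_polyhedron {a : ι → Module.Dual 𝕜 V} {b : ι → 𝕜} {y w : V}
    (hy : y ∈ polyhedron a b) (hw : w ∈ polyhedron a 0) {t : 𝕜} (ht : 0 ≤ t) :
    y + t • w ∈ polyhedron a b := fun i ↦ by
  rw [map_add, map_smul]
  exact add_le_of_le_of_nonpos (hy i) (smul_nonpos_of_nonneg_of_nonpos ht (hw i))

theorem nonneg_of_bddBelow_image_polyhedron {a : ι → Module.Dual 𝕜 V} {b : ι → 𝕜}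
    {q : Module.Dual 𝕜 V} (hne : (polyhedron a b).Nonempty)
    (hbdd : BddBelow (q '' polyhedron a b)) {w : V} (hw : w ∈ polyhedron a 0) : 0 ≤ q w := by
  obtain ⟨y, hy⟩ := hne
  obtain ⟨M, hM⟩ := hbdd
  by_contra! hqw
  have hMy : M ≤ q y := hM (mem_image_of_mem q hy)
  have ht : 0 ≤ (q y - M + 1) / (-q w) := div_nonneg (by linarith) (by linarith)
  have hray := hM (mem_image_of_mem q (add_smul_mem_polyhedron hy hw ht))
  rw [map_add, map_smul, smul_eq_mul, div_neg, neg_mul, div_mul_cancel₀ _ hqw.ne] at hray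
  linarith

theorem exists_tight_le_of_mem_argminOn {a : Option ι → Module.Dual 𝕜 V} {b : Option ι → 𝕜}
    {q : Module.Dual 𝕜 V} {y₀ y : V}
    (hy₀ : y₀ ∈ argminOn q (polyhedron (a ∘ some) (b ∘ some))) (hb : b none ≤ a none y₀)
    (hy : y ∈ polyhedron a b) :
    ∃ x ∈ polyhedron (a ∘ some) (b ∘ some), a none x = b none ∧ q x ≤ q y := by
  obtain ⟨hnone, hsome⟩ := mem_polyhedron_option.1 hy
  have himage : a none '' segment 𝕜 y y₀ = Icc (a none y) (a none y₀) :=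
    (image_segment 𝕜 (a none).toAffineMap y y₀).trans (segment_eq_Icc (hnone.trans hb))
  obtain ⟨x, hx, hbx⟩ : b none ∈ a none '' segment 𝕜 y y₀ := himage ▸ ⟨hnone, hb⟩
  exact ⟨x, (convex_polyhedron _ _).segment_subset hsome hy₀.1 hx, hbx,
    (convex_halfSpace_le q.isLinear (q y)).segment_subset le_rfl (hy₀.2 hsome) hx⟩

theorem exists_tight_le_of_apply_nonpos {a : Option ι → Module.Dual 𝕜 V} {b : Option ι → 𝕜}
    {q : Module.Dual 𝕜 V} {w y : V} (hw : w ∈ polyhedron (a ∘ some) 0) (hwnone : 0 < a none w)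
    (hqw : q w ≤ 0) (hy : y ∈ polyhedron a b) :
    ∃ x ∈ polyhedron (a ∘ some) (b ∘ some), a none x = b none ∧ q x ≤ q y := by
  obtain ⟨hnone, hsome⟩ := mem_polyhedron_option.1 hy
  have ht : 0 ≤ (b none - a none y) / a none w := div_nonneg (sub_nonneg.2 hnone) hwnone.le
  refine ⟨_, add_smul_mem_polyhedron hsome hw ht, ?_, ?_⟩
  · rw [map_add, map_smul, smul_eq_mul, div_mul_cancel₀ _ hwnone.ne', add_sub_cancel]
  · rw [map_add, map_smul]
    exact add_le_of_nonpos_right (smul_nonpos_of_nonneg_of_nonpos ht hqw)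

theorem argminOn_polyhedron_nonempty_of_tight {a : Option ι → Module.Dual 𝕜 V} {b : Option ι → 𝕜}
    {q : Module.Dual 𝕜 V} {y₁ : V} (hy₁ : a none y₁ = b none)
    (htight : ∀ y ∈ polyhedron a b, ∃ x ∈ polyhedron (a ∘ some) (b ∘ some),
      a none x = b none ∧ q x ≤ q y)
    (hker : (argminOn (q.domRestrict (a none).ker)
      (polyhedron (fun i ↦ (a (some i)).domRestrict (a none).ker)
        fun i ↦ b (some i) - a (some i) y₁)).Nonempty) :
    (argminOn q (polyhedron a b)).Nonempty := by
  obtain ⟨w, hw, hmin⟩ := hker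
  refine ⟨y₁ + w, mem_polyhedron_option.2 ⟨?_, add_mem_polyhedron_iff.2 hw⟩, fun y hy ↦ ?_⟩
  · rw [map_add, w.2, hy₁, add_zero]
  obtain ⟨x, hx, hbx, hqx⟩ := htight y hy
  have hxker : x - y₁ ∈ (a none).ker := by rw [LinearMap.mem_ker, map_sub, hbx, hy₁, sub_self]
  have hxsub : x - y₁ ∈ polyhedron (a ∘ some) fun i ↦ b (some i) - a (some i) y₁ :=
    add_mem_polyhedron_iff.1 (by rwa [add_sub_cancel])
  have hle : q w ≤ q (x - y₁) := hmin (a := ⟨x - y₁, hxker⟩) hxsub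
  calc q (y₁ + w) = q y₁ + q w := map_add q y₁ w
    _ ≤ q y₁ + q (x - y₁) := by gcongr
    _ = q x := by rw [← map_add, add_sub_cancel]
    _ ≤ q y := hqx

-- One constraint is removed at a time. Either some minimizer without it satisfies it, or every
-- feasible point can be moved, without increasing `q`, to where it is tight; there the problem
-- lives on a translate of its kernel, with one constraint fewer.
theorem argminOn_polyhedron_nonempty [Finite ι] {a : ι → Module.Dual 𝕜 V} {b : ι → 𝕜}
    {q : Module.Dual 𝕜 V} (hne : (polyhedron a b).Nonempty)
    (hq : ∀ w ∈ polyhedron a 0, 0 ≤ q w) : (argminOn q (polyhedron a b)).Nonempty := by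
  induction ι using Finite.induction_empty_option generalizing V with
  | of_equiv e ih =>
    rw [← polyhedron_comp_equiv e] at hne ⊢
    exact ih hne fun w hw ↦ hq w (polyhedron_comp_equiv e a 0 ▸ hw)
  | h_empty =>
    obtain ⟨y, hy⟩ := hne
    have hq0 (w) : q w = 0 := le_antisymm (by simpa using hq (-w) nofun) (hq w nofun)
    exact ⟨y, hy, fun y' _ ↦ by simp [hq0]⟩
  | h_option ih =>
    have of_tight (htight : ∀ y ∈ polyhedron a b, ∃ x ∈ polyhedron (a ∘ some) (b ∘ some),
        a none x = b none ∧ q x ≤ q y) : (argminOn q (polyhedron a b)).Nonempty := by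
      obtain ⟨y₁, hy₁, hby₁, -⟩ := htight _ hne.some_mem
      exact argminOn_polyhedron_nonempty_of_tight hby₁ htight
        (ih ⟨0, fun i ↦ by simpa using hy₁ i⟩
          fun w hw ↦ hq w (mem_polyhedron_option.2 ⟨w.2.le, hw⟩))
    by_cases hrec : ∀ w ∈ polyhedron (a ∘ some) 0, 0 ≤ q w
    · obtain ⟨y₀, hy₀⟩ := ih (hne.mono fun y hy ↦ (mem_polyhedron_option.1 hy).2) hrec
      rcases le_total (a none y₀) (b none) with hle | hge
      · exact ⟨y₀, mem_polyhedron_option.2 ⟨hle, hy₀.1⟩,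
          hy₀.2.on_subset fun y hy ↦ (mem_polyhedron_option.1 hy).2⟩
      · exact of_tight fun y ↦ exists_tight_le_of_mem_argminOn hy₀ hge
    · push Not at hrec
      obtain ⟨w, hw, hqw⟩ := hrec
      have hwnone : 0 < a none w := by
        by_contra! hle
        exact hqw.not_ge (hq w (mem_polyhedron_option.2 ⟨hle, hw⟩))
      exact of_tight fun y ↦ exists_tight_le_of_apply_nonpos hw hwnone hqw.le

theorem argminOn_polyhedron_nonempty_iff [Finite ι] {a : ι → Module.Dual 𝕜 V} {b : ι → 𝕜}
    {f : Module.Dual 𝕜 V} : (argminOn f (polyhedron a b)).Nonempty ↔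
      (polyhedron a b).Nonempty ∧ ∀ w ∈ polyhedron a 0, 0 ≤ f w := by
  refine ⟨?_, fun h ↦ argminOn_polyhedron_nonempty h.1 h.2⟩
  rintro ⟨y, hy, hmin⟩
  exact ⟨⟨y, hy⟩, fun w ↦ nonneg_of_bddBelow_image_polyhedron ⟨y, hy⟩
    ⟨f y, forall_mem_image.2 hmin⟩⟩

theorem argminOn_argminOn_polyhedron_nonempty [Finite ι] {a : ι → Module.Dual 𝕜 V} {b b' : ι → 𝕜}
    {f q : Module.Dual 𝕜 V} (hne : (argminOn f (polyhedron a b)).Nonempty)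
    (hbdd : BddBelow (q '' argminOn f (polyhedron a b))) (hne' : (polyhedron a b').Nonempty) :
    (argminOn q (argminOn f (polyhedron a b'))).Nonempty := by
  have hf : ∀ w ∈ polyhedron a 0, 0 ≤ f w := (argminOn_polyhedron_nonempty_iff.1 hne).2
  obtain ⟨y', hy'⟩ := argminOn_polyhedron_nonempty_iff.2 ⟨hne', hf⟩
  have ⟨y, hy⟩ := hne
  rw [argminOn_polyhedron_eq hy] at hne hbdd
  rw [argminOn_polyhedron_eq hy']
  exact argminOn_polyhedron_nonempty ⟨y', argminOn_polyhedron_eq hy' ▸ hy'⟩ fun w ↦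
    nonneg_of_bddBelow_image_polyhedron hne hbdd

end Polyhedron

section EReal

theorem sInf_coe_image_ne_top_iff {S : Set ℝ} :
    sInf (Real.toEReal '' S) ≠ ⊤ ↔ S.Nonempty := by
  simp [sInf_eq_top, Set.Nonempty]

theorem sInf_coe_image_ne_bot_iff {S : Set ℝ} :
    sInf (Real.toEReal '' S) ≠ ⊥ ↔ BddBelow S := by
  constructor
  · intro h
    obtain ⟨M, -, hMle⟩ := EReal.lt_iff_exists_real_btwn.1 (bot_lt_iff_ne_bot.2 h)
    exact ⟨M, fun r hr ↦ EReal.coe_le_coe_iff.1 (hMle.le.trans (sInf_le (mem_image_of_mem _ hr)))⟩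
  · rintro ⟨M, hM⟩
    exact ne_bot_of_le_ne_bot (EReal.coe_ne_bot M)
      (le_sInf (forall_mem_image.2 fun r hr ↦ EReal.coe_le_coe_iff.2 (hM hr)))

end EReal

section Bilevel

variable {n m s : ℕ} {c : Fin n → ℝ} {q d : Fin m → ℝ} {A : Matrix (Fin s) (Fin m) ℝ}
  {T : Matrix (Fin s) (Fin n) ℝ} {x : Fin n → ℝ} {z : Fin s → ℝ}

theorem Psi_nonempty_iff : (Psi d A T x z).Nonempty ↔
    (LowerFeas A T x z).Nonempty ∧ ∃ u : Fin s → ℝ, Aᵀ *ᵥ u = d ∧ u ≤ 0 := by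
  rw [exists_transpose_mulVec_eq_nonpos_iff]
  exact argminOn_polyhedron_nonempty_iff (a := fun i ↦ dotProductBilin ℝ ℝ (A i))
    (b := T *ᵥ x + z) (f := dotProductBilin ℝ ℝ d)

theorem argminOn_Psi_nonempty {x' : Fin n → ℝ} {z' : Fin s → ℝ} (hne : (Psi d A T x z).Nonempty)
    (hbdd : BddBelow ((fun y ↦ q ⬝ᵥ y) '' Psi d A T x z)) (hne' : (LowerFeas A T x' z').Nonempty) :
    (argminOn (fun y ↦ q ⬝ᵥ y) (Psi d A T x' z')).Nonempty :=
  argminOn_argminOn_polyhedron_nonempty (a := fun i ↦ dotProductBilin ℝ ℝ (A i))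
    (b := T *ᵥ x + z) (b' := T *ᵥ x' + z') (f := dotProductBilin ℝ ℝ d)
    (q := dotProductBilin ℝ ℝ q) hne hbdd hne'

theorem mem_domf_iff : (x, z) ∈ domf c q d A T ↔
    (Psi d A T x z).Nonempty ∧ BddBelow ((fun y ↦ q ⬝ᵥ y) '' Psi d A T x z) := by
  have himage : (fun y ↦ ((q ⬝ᵥ y : ℝ) : EReal)) '' Psi d A T x z =
      Real.toEReal '' ((fun y ↦ q ⬝ᵥ y) '' Psi d A T x z) := (image_image _ _ _).symm
  change fE c q d A T x z ≠ ⊤ ∧ fE c q d A T x z ≠ ⊥ ↔ _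
  rw [fE, himage, EReal.add_ne_top_iff_ne_top_right (EReal.coe_ne_bot _) (EReal.coe_ne_top _),
    EReal.add_ne_bot_iff, sInf_coe_image_ne_top_iff, sInf_coe_image_ne_bot_iff, image_nonempty,
    and_iff_right (EReal.coe_ne_bot _)]

end Bilevel

theorem domf_nonempty_iff {n m s : ℕ} (c : Fin n → ℝ) (q d : Fin m → ℝ)
    (A : Matrix (Fin s) (Fin m) ℝ) (T : Matrix (Fin s) (Fin n) ℝ) :
    ((domf c q d A T).Nonempty ↔
      ∃ (x : Fin n → ℝ) (z : Fin s → ℝ),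
        (LowerFeas A T x z).Nonempty ∧
        (∃ u : Fin s → ℝ, Aᵀ.mulVec u = d ∧ u ≤ 0) ∧
        BddBelow ((fun y => q ⬝ᵥ y) '' Psi d A T x z)) ∧
    ((∃ (x : Fin n → ℝ) (z : Fin s → ℝ),
        (LowerFeas A T x z).Nonempty ∧
        (∃ u : Fin s → ℝ, Aᵀ.mulVec u = d ∧ u ≤ 0) ∧
        BddBelow ((fun y => q ⬝ᵥ y) '' Psi d A T x z)) →
      ∀ p ∈ Pfeas A T, ∃ y ∈ Psi d A T p.1 p.2,
        ∀ y' ∈ Psi d A T p.1 p.2, q ⬝ᵥ y ≤ q ⬝ᵥ y') := by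
  simp only [← and_assoc, ← Psi_nonempty_iff]
  refine ⟨by simp only [Set.Nonempty, Prod.exists, mem_domf_iff], ?_⟩
  rintro ⟨x, z, hne, hbdd⟩ p hp
  exact argminOn_Psi_nonempty hne hbdd hp
end
end

section
/- Assume dom f ≠ ∅, that μ_Z ∈ 𝓜¹_s is absolutely continuous with respect to the Lebesgue measure on ℝˢ, and fix ρ ∈ [0,1). Then the mean upper semideviation functional Q_{SD¹_ρ}(x) := Q_𝔼(x) + ρ·∫_{ℝˢ} max{ f(x,z) − Q_𝔼(x), 0 } μ_Z(dz), where Q_𝔼(x) := ∫_{ℝˢ} f(x,z) μ_Z(dz), is continuously differentiable at every x₀ ∈ int P_Z satisfying Q_𝔼(x₀) ≠ 0. -/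
open MeasureTheory Matrix Set Topology Filter
open scoped ENNReal NNReal

noncomputable section

/-! Minimizing first `d` and then `q` is a linear program whose objective takes values in the
lexicographically ordered plane. The right-hand sides `w` of the feasible systems `A y ≤ w` are
covered by finitely many closed convex regions, on each of which a basic solution that is linear in
`w` is optimal. Hence `f(x, z) = cᵀx + G(T x + z)` on `P` with `G` Lipschitz, and linear on every
region. The boundaries of the regions are null sets, so `f(·, z)` is almost surely `C¹` near a
given `x ∈ int P_Z`, and the Lipschitz bound allows differentiation under the integral sign.

The positive part is harmless as long as the ties `f(x, z) = Q_𝔼(x)` have probability zero. On a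
region with interior points, replacing `w` by `w + A v` changes the optimal value by `qᵀv`, so for
`q ≠ 0` the linear pieces of `G` are not constant and the level sets of `G` are null; for `q = 0`
the function `f` does not depend on `z`, and the semideviation vanishes. -/

section Lexicographic

instance prodLex_posSMulMono {𝕜 α β : Type*} [Semiring 𝕜] [PartialOrder 𝕜] [AddCommMonoid α]
    [Module 𝕜 α] [PartialOrder α] [PosSMulStrictMono 𝕜 α] [AddCommMonoid β] [Module 𝕜 β]
    [Preorder β] [PosSMulMono 𝕜 β] : PosSMulMono 𝕜 (α ×ₗ β) where
  smul_le_smul_of_nonneg_left a ha x y hxy := by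
    rcases ha.eq_or_lt with rfl | ha
    · simp
    rw [Prod.Lex.le_iff] at hxy ⊢
    rcases hxy with h | ⟨h, h'⟩
    · exact Or.inl (smul_lt_smul_of_pos_left h ha)
    · exact Or.inr ⟨congrArg (a • ·) h, smul_le_smul_of_nonneg_left h' ha.le⟩

/-- The objective "first `d`, then `q`" of an optimistic bilevel program: `q` only breaks the ties
left by `d`. -/
def lexObjective {𝕜 E : Type*} [Semiring 𝕜] [AddCommMonoid E] [Module 𝕜 E] (d q : E →ₗ[𝕜] 𝕜) :
    E →ₗ[𝕜] 𝕜 ×ₗ 𝕜 :=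
  (toLexLinearEquiv 𝕜 (𝕜 × 𝕜)).toLinearMap ∘ₗ d.prod q

theorem lexObjective_le_iff {𝕜 E : Type*} [Semiring 𝕜] [PartialOrder 𝕜] [AddCommMonoid E]
    [Module 𝕜 E] {d q : E →ₗ[𝕜] 𝕜} {y y' : E} :
    lexObjective d q y ≤ lexObjective d q y' ↔ d y < d y' ∨ d y = d y' ∧ q y ≤ q y' :=
  Prod.Lex.toLex_le_toLex

end Lexicographic

section LinearProgram

theorem exists_linearMap_comp_comp_self {𝕜 E F : Type*} [DivisionRing 𝕜] [AddCommGroup E]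
    [Module 𝕜 E] [AddCommGroup F] [Module 𝕜 F] (f : E →ₗ[𝕜] F) :
    ∃ g : F →ₗ[𝕜] E, f ∘ₗ g ∘ₗ f = f := by
  obtain ⟨r, hr⟩ := f.rangeRestrict.exists_rightInverse_of_surjective f.range_rangeRestrict
  obtain ⟨g, hg⟩ := r.exists_extend
  refine ⟨g, LinearMap.ext fun y => ?_⟩
  have hgf : g (f y) = r (f.rangeRestrict y) := LinearMap.congr_fun hg (f.rangeRestrict y)
  have hfr : f (r (f.rangeRestrict y)) = f y :=
    congrArg Subtype.val (LinearMap.congr_fun hr (f.rangeRestrict y))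
  simp only [LinearMap.comp_apply, hgf, hfr]

/-- A solution of the equations `(A y) i = w i`, `i ∈ B`, chosen linearly in `w` by means of a
generalized inverse; it is a solution only if the equations are consistent. -/
def basicSolution {𝕜 ι E : Type*} [Field 𝕜] [AddCommGroup E] [Module 𝕜 E]
    (A : E →ₗ[𝕜] ι → 𝕜) (B : Set ι) : (ι → 𝕜) →ₗ[𝕜] E :=
  (exists_linearMap_comp_comp_self
    (LinearMap.funLeft 𝕜 𝕜 ((↑) : B → ι) ∘ₗ A)).choose ∘ₗ LinearMap.funLeft 𝕜 𝕜 ((↑) : B → ι)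

theorem eqOn_map_basicSolution {𝕜 ι E : Type*} [Field 𝕜] [AddCommGroup E] [Module 𝕜 E]
    {A : E →ₗ[𝕜] ι → 𝕜} {B : Set ι} {w : ι → 𝕜} {y : E} (h : EqOn (A y) w B) :
    EqOn (A (basicSolution A B w)) w B := by
  let f := LinearMap.funLeft 𝕜 𝕜 ((↑) : B → ι) ∘ₗ A
  have hw : LinearMap.funLeft 𝕜 𝕜 ((↑) : B → ι) w = f y := funext fun i => (h i.2).symm
  have hf := LinearMap.congr_fun (exists_linearMap_comp_comp_self f).choose_spec y
  intro i hi
  calc A (basicSolution A B w) i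
      = f ((exists_linearMap_comp_comp_self f).choose (f y)) ⟨i, hi⟩ := by rw [← hw]; rfl
    _ = f y ⟨i, hi⟩ := congrFun hf _
    _ = w i := h hi

/-- The constraints of `A y ≤ w` that hold with equality at `y`. -/
def activeSet {𝕜 ι E : Type*} [Semiring 𝕜] [AddCommMonoid E] [Module 𝕜 E]
    (A : E →ₗ[𝕜] ι → 𝕜) (w : ι → 𝕜) (y : E) : Set ι :=
  {i | A y i = w i}

variable {𝕜 ι E V : Type*} [Field 𝕜] [LinearOrder 𝕜] [AddCommGroup E] [Module 𝕜 E]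
  [AddCommGroup V] [LinearOrder V] [Module 𝕜 V]
  {A : E →ₗ[𝕜] ι → 𝕜} {ℓ : E →ₗ[𝕜] V} {w : ι → 𝕜} {y v : E} {B : Set ι}

variable (A ℓ w y) in
/-- `y` is an optimal solution of the linear program "minimize `ℓ y` subject to `A y ≤ w`", whose
objective takes values in a linearly ordered vector space. -/
def IsLPSolution : Prop :=
  A y ≤ w ∧ ∀ y', A y' ≤ w → ℓ y ≤ ℓ y'

theorem IsLPSolution.map_eq {y' : E} (h : IsLPSolution A ℓ w y) (h' : IsLPSolution A ℓ w y') :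
    ℓ y = ℓ y' :=
  (h.2 y' h'.1).antisymm (h'.2 y h.1)

theorem IsLPSolution.add [IsStrictOrderedRing 𝕜] [IsOrderedAddMonoid V]
    (h : IsLPSolution A ℓ w y) (v : E) : IsLPSolution A ℓ (w + A v) (y + v) := by
  refine ⟨by simpa using h.1, fun y' hy' => ?_⟩
  have := h.2 (y' - v) (by simpa using hy')
  rwa [map_sub, le_sub_iff_add_le, ← map_add] at this

variable (A ℓ B) in
/-- The right-hand sides at which the basic solution of `B` is feasible with active constraints
`B`, for sets `B` that certify optimality: no direction decreasing along the constraints in `B`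
improves the objective. It is empty for all other `B`. -/
def optimalRegion : Set (ι → 𝕜) :=
  {w | (∀ v, (∀ i ∈ B, A v i ≤ 0) → 0 ≤ ℓ v) ∧ A (basicSolution A B w) ≤ w ∧
    EqOn (A (basicSolution A B w)) w B}

theorem isLPSolution_basicSolution [IsStrictOrderedRing 𝕜] [IsOrderedAddMonoid V]
    (hw : w ∈ optimalRegion A ℓ B) : IsLPSolution A ℓ w (basicSolution A B w) := by
  obtain ⟨hB, hfeas, hactive⟩ := hw
  refine ⟨hfeas, fun y hy => ?_⟩
  have := hB (y - basicSolution A B w) fun i hi => by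
    rw [map_sub, Pi.sub_apply, hactive hi]
    exact sub_nonpos.2 (hy i)
  rwa [map_sub, sub_nonneg] at this

variable [Finite ι]

-- Simplex ratio test: move along `v` until the first inactive constraint becomes active.
theorem exists_feasible_add_smul_of_nonpos_on_activeSet [IsStrictOrderedRing 𝕜] (hy : A y ≤ w)
    (hv : ∀ i ∈ activeSet A w y, A v i ≤ 0) (hpos : ∃ j, 0 < A v j) :
    ∃ t : 𝕜, 0 < t ∧ A (y + t • v) ≤ w ∧
      ∃ j ∉ activeSet A w y, j ∈ activeSet A w (y + t • v) := by
  obtain ⟨j, hj, hmin⟩ :=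
    (toFinite {j | 0 < A v j}).exists_minimalFor (fun j => (w j - A y j) / A v j) _ hpos
  simp only [mem_ofPred_eq] at hj hmin
  have hj_inactive : j ∉ activeSet A w y := fun h => (hv j h).not_gt hj
  have ht : 0 < (w j - A y j) / A v j :=
    div_pos (sub_pos.2 ((hy j).lt_of_ne hj_inactive)) hj
  refine ⟨_, ht, fun i => ?_, j, hj_inactive, ?_⟩
  · simp only [map_add, map_smul, Pi.add_apply, Pi.smul_apply, smul_eq_mul]
    rcases le_or_gt (A v i) 0 with hi | hi
    · linarith [mul_nonpos_of_nonneg_of_nonpos ht.le hi, hy i]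
    · have ht_le : (w j - A y j) / A v j ≤ (w i - A y i) / A v i := (le_total _ _).elim id (hmin hi)
      linarith [(le_div_iff₀ hi).1 ht_le]
  · simp [activeSet, div_mul_cancel₀ _ hj.ne']

theorem exists_feasible_add_smul [IsStrictOrderedRing 𝕜] (hy : A y ≤ w)
    (hv : ∀ i ∈ activeSet A w y, A v i ≤ 0) : ∃ t : 𝕜, 0 < t ∧ A (y + t • v) ≤ w := by
  by_cases hpos : ∃ j, 0 < A v j
  · obtain ⟨t, ht, hfeas, -⟩ := exists_feasible_add_smul_of_nonpos_on_activeSet hy hv hpos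
    exact ⟨t, ht, hfeas⟩
  · push Not at hpos
    refine ⟨1, one_pos, ?_⟩
    rw [one_smul, map_add]
    simpa using add_le_add hy (show A v ≤ 0 from hpos)

variable [IsStrictOrderedRing 𝕜] [IsOrderedAddMonoid V] [PosSMulMono 𝕜 V]

theorem map_nonpos_of_maximalFor_activeSet {a : V}
    (hy : MaximalFor (· ∈ {y | A y ≤ w ∧ ℓ y ≤ a}) (activeSet A w) y)
    (hv : ∀ i ∈ activeSet A w y, A v i = 0) (hℓv : ℓ v ≤ 0) : A v ≤ 0 := by
  obtain ⟨⟨hfeas, hle⟩, hmax⟩ := hy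
  by_contra hpos
  simp only [Pi.le_def, not_forall, not_le] at hpos
  obtain ⟨t, ht, hfeas', j, hj, hj'⟩ :=
    exists_feasible_add_smul_of_nonpos_on_activeSet hfeas (fun i hi => (hv i hi).le) hpos
  have hle' : ℓ (y + t • v) ≤ a := by
    rw [map_add, map_smul]
    exact (add_le_of_nonpos_right (smul_nonpos_of_nonneg_of_nonpos ht.le hℓv)).trans hle
  have hkeep : activeSet A w y ⊆ activeSet A w (y + t • v) := fun i hi => by
    have hi' : A y i = w i := hi
    simp [activeSet, hv i hi, hi']
  exact hj (hmax ⟨hfeas', hle'⟩ hkeep hj')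

theorem exists_feasible_basicSolution_le (hℓ : ∀ v, A v ≤ 0 → 0 ≤ ℓ v) (hy : A y ≤ w) :
    ∃ B, A (basicSolution A B w) ≤ w ∧ activeSet A w (basicSolution A B w) = B ∧
      ℓ (basicSolution A B w) ≤ ℓ y := by
  obtain ⟨y', hmax⟩ := Finite.exists_maximalFor' (activeSet A w)
    {y' | A y' ≤ w ∧ ℓ y' ≤ ℓ y} (toFinite _) ⟨y, hy, le_rfl⟩
  set B := activeSet A w y'
  set u := basicSolution A B w - y' with hu
  have hsol : EqOn (A (basicSolution A B w)) w B := eqOn_map_basicSolution (y := y') fun _ h => h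
  have hu_zero : ∀ i ∈ B, A u i = 0 := fun i hi => by
    have hi' : A y' i = w i := hi
    rw [hu, map_sub, Pi.sub_apply, hsol hi, hi', sub_self]
  have hℓu : ℓ u ≤ 0 := by
    rcases le_total (ℓ u) 0 with h | h
    · exact h
    · simpa using hℓ (-u) (map_nonpos_of_maximalFor_activeSet hmax (by simpa using hu_zero)
        (by simpa using h))
  have hu_eq : basicSolution A B w = y' + u := by rw [hu, add_sub_cancel]
  have hfeas : A (basicSolution A B w) ≤ w := by
    simpa [hu_eq] using
      add_le_add hmax.1.1 (map_nonpos_of_maximalFor_activeSet hmax hu_zero hℓu)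
  have hval : ℓ (basicSolution A B w) ≤ ℓ y := by
    rw [hu_eq, map_add]
    exact (add_le_of_nonpos_right hℓu).trans hmax.1.2
  exact ⟨B, hfeas, (hmax.2 ⟨hfeas, hval⟩ hsol).antisymm hsol, hval⟩

theorem exists_mem_optimalRegion (hℓ : ∀ v, A v ≤ 0 → 0 ≤ ℓ v) (hw : ∃ y, A y ≤ w) :
    ∃ B, w ∈ optimalRegion A ℓ B := by
  let S : Set (Set ι) :=
    {B | A (basicSolution A B w) ≤ w ∧ activeSet A w (basicSolution A B w) = B}
  have hS : S.Nonempty := by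
    obtain ⟨y, hy⟩ := hw
    obtain ⟨B, hB, hB', -⟩ := exists_feasible_basicSolution_le hℓ hy
    exact ⟨B, hB, hB'⟩
  obtain ⟨B, ⟨hfeas, hactive⟩, hmin⟩ :=
    (toFinite S).exists_minimalFor (fun B => ℓ (basicSolution A B w)) S hS
  have hopt : ∀ y, A y ≤ w → ℓ (basicSolution A B w) ≤ ℓ y := fun y hy => by
    obtain ⟨B', hB', hB'', hle⟩ := exists_feasible_basicSolution_le hℓ hy
    exact (le_total _ _).elim (le_trans · hle) fun h => (hmin ⟨hB', hB''⟩ h).trans hle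
  refine ⟨B, fun v hv => ?_, hfeas, fun i hi => by rwa [← hactive] at hi⟩
  obtain ⟨t, ht, htfeas⟩ := exists_feasible_add_smul hfeas (v := v) (by rwa [hactive])
  have := hopt _ htfeas
  rwa [map_add, le_add_iff_nonneg_right, map_smul,
    smul_nonneg_iff_nonneg_of_pos_left ht] at this

end LinearProgram

section OptimalRegion

variable {ι E V : Type*} [AddCommGroup E] [Module ℝ E] [AddCommGroup V] [LinearOrder V]
  [Module ℝ V] {A : E →ₗ[ℝ] ι → ℝ} {ℓ : E →ₗ[ℝ] V} {w : ι → ℝ} {B : Set ι}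

theorem convex_optimalRegion : Convex ℝ (optimalRegion A ℓ B) := by
  rintro w ⟨hB, hw, hwB⟩ w' ⟨-, hw', hwB'⟩ a b ha hb -
  refine ⟨hB, ?_, fun i hi => ?_⟩
  · simpa using add_le_add (smul_le_smul_of_nonneg_left hw ha)
      (smul_le_smul_of_nonneg_left hw' hb)
  · simp [hwB hi, hwB' hi]

theorem isClosed_optimalRegion [Finite ι] : IsClosed (optimalRegion A ℓ B) := by
  have hc : Continuous fun w => A (basicSolution A B w) :=
    (A ∘ₗ basicSolution A B).continuous_of_finiteDimensional
  have hactive : IsClosed {w | EqOn (A (basicSolution A B w)) w B} := by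
    simp only [EqOn, ofPred_forall]
    exact isClosed_iInter fun i => isClosed_iInter fun _ =>
      isClosed_eq ((continuous_apply i).comp hc) (continuous_apply i)
  exact isClosed_const.and ((isClosed_le hc continuous_id).and hactive)

theorem map_basicSolution_map_of_mem_interior [IsOrderedAddMonoid V]
    (hw : w ∈ interior (optimalRegion A ℓ B)) (v : E) : ℓ (basicSolution A B (A v)) = ℓ v := by
  have hcont : ContinuousAt (fun t : ℝ => w + t • A v) 0 := by fun_prop
  have hev : ∀ᶠ t : ℝ in 𝓝[≠] 0, w + t • A v ∈ optimalRegion A ℓ B :=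
    nhdsWithin_le_nhds (hcont (by simpa using mem_interior_iff_mem_nhds.1 hw))
  obtain ⟨t, ht, ht0⟩ := (hev.and self_mem_nhdsWithin).exists
  have hsol := (isLPSolution_basicSolution (interior_subset hw)).add (t • v)
  rw [map_smul] at hsol
  have := (isLPSolution_basicSolution ht).map_eq hsol
  simp only [map_add, map_smul, add_right_inj] at this
  exact smul_right_injective V ht0 this

theorem convex_setOf_feasible : Convex ℝ {w | ∃ y, A y ≤ w} := by
  rintro w ⟨y, hy⟩ w' ⟨y', hy'⟩ a b ha hb -
  refine ⟨a • y + b • y', ?_⟩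
  simpa using add_le_add (smul_le_smul_of_nonneg_left hy ha)
      (smul_le_smul_of_nonneg_left hy' hb)

end OptimalRegion

section LexicographicProgram

variable {𝕜 ι E : Type*} [Field 𝕜] [LinearOrder 𝕜] [AddCommGroup E] [Module 𝕜 E]
  {A : E →ₗ[𝕜] ι → 𝕜} {d q : E →ₗ[𝕜] 𝕜} {w : ι → 𝕜} {y : E}

theorem IsLPSolution.isLeast_of_lexObjective (h : IsLPSolution A (lexObjective d q) w y) :
    IsLeast (q '' {y | IsLPSolution A d w y}) (q y) := by
  refine ⟨⟨y, ⟨h.1, fun y' hy' => ?_⟩, rfl⟩, ?_⟩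
  · rcases lexObjective_le_iff.1 (h.2 y' hy') with hlt | ⟨heq, -⟩
    exacts [hlt.le, heq.le]
  · rintro _ ⟨y', hy', rfl⟩
    rcases lexObjective_le_iff.1 (h.2 y' hy'.1) with hlt | ⟨-, hle⟩
    exacts [absurd (hy'.2 y h.1) hlt.not_ge, hle]

theorem lexObjective_nonneg_of_bddBelow [IsStrictOrderedRing 𝕜] (hy : IsLPSolution A d w y)
    (hbdd : BddBelow (q '' {y | IsLPSolution A d w y})) {v : E} (hv : A v ≤ 0) :
    0 ≤ lexObjective d q v := by
  have hray : ∀ t : 𝕜, 0 ≤ t → A (y + t • v) ≤ w := fun t ht => by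
    simpa using add_le_add hy.1 (smul_nonpos_of_nonneg_of_nonpos ht hv)
  have hd : 0 ≤ d v := by simpa using hy.2 _ (hray 1 zero_le_one)
  rw [← map_zero (lexObjective d q), lexObjective_le_iff, map_zero, map_zero]
  refine hd.lt_or_eq.imp_right fun hd0 => ⟨hd0, ?_⟩
  obtain ⟨r, hr⟩ := hbdd
  by_contra! hq
  have ht : 0 ≤ (r - q y - 1) / q v := by
    refine div_nonneg_of_nonpos ?_ hq.le
    linarith [hr ⟨y, hy, rfl⟩]
  have := hr ⟨_, ⟨hray _ ht, by simpa [← hd0] using hy.2⟩, rfl⟩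
  rw [map_add, map_smul, smul_eq_mul, div_mul_cancel₀ _ hq.ne] at this
  linarith

end LexicographicProgram

section Lipschitz

variable {E F : Type*} [NormedAddCommGroup E] [NormedSpace ℝ E] [PseudoMetricSpace F]

theorem lipschitzOnWith_of_eventually_dist_le {K : ℝ≥0} {g : E → F} {S : Set E}
    (hS : Convex ℝ S)
    (hg : ∀ w ∈ S, ∀ᶠ w' in 𝓝[S] w, dist (g w') (g w) ≤ K * dist w' w) :
    LipschitzOnWith K g S := by
  refine LipschitzOnWith.of_dist_le_mul fun w' hw' w hw => ?_
  have hcont : ContinuousOn g S := fun u hu => tendsto_iff_dist_tendsto_zero.2 <| by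
    refine squeeze_zero' (.of_forall fun _ => dist_nonneg) (hg u hu) ?_
    have : Continuous fun u' => K * dist u' u := by fun_prop
    simpa using (this.tendsto u).mono_left nhdsWithin_le_nhds
  let γ : ℝ → E := AffineMap.lineMap w w'
  have hγS : MapsTo γ (Icc 0 1) S := fun t ht => hS.lineMap_mem hw hw' ht
  have hγ : Continuous γ := AffineMap.lineMap_continuous
  have hbound : ∀ t ∈ Ico (0 : ℝ) 1, ∀ r, K * dist w' w < r →
      ∃ᶠ t' in 𝓝[>] t, slope (fun t => dist (g (γ t)) (g w)) t t' < r := by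
    intro t ht r hr
    have hmem : ∀ᶠ t' in 𝓝[>] t, t' ∈ Ioc t 1 := Ioc_mem_nhdsGT ht.2
    have hγt : Tendsto γ (𝓝[>] t) (𝓝[S] γ t) := tendsto_nhdsWithin_iff.2
      ⟨(hγ.tendsto t).mono_left nhdsWithin_le_nhds,
        hmem.mono fun t' ht' => hγS ⟨ht.1.trans ht'.1.le, ht'.2⟩⟩
    refine Eventually.frequently ?_
    filter_upwards [hmem, hγt.eventually (hg _ (hγS ⟨ht.1, ht.2.le⟩))] with t' ht' hdist
    have htt' : 0 < t' - t := sub_pos.2 ht'.1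
    refine lt_of_le_of_lt ?_ hr
    rw [slope_def_field, div_le_iff₀ htt']
    calc dist (g (γ t')) (g w) - dist (g (γ t)) (g w)
        ≤ dist (g (γ t')) (g (γ t)) := sub_le_iff_le_add.2 (dist_triangle _ _ _)
      _ ≤ K * dist (γ t') (γ t) := hdist
      _ = K * dist w' w * (t' - t) := by
        rw [dist_lineMap_lineMap, Real.dist_eq, abs_of_pos htt', dist_comm w]
        ring
  have hgγ : ContinuousOn (fun t => g (γ t)) (Icc 0 1) := hcont.comp hγ.continuousOn hγS
  have := image_le_of_liminf_slope_right_le_deriv_boundary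
    (f := fun t => dist (g (γ t)) (g w)) (B := fun t => K * dist w' w * t)
    (fun t ht => Tendsto.dist (hgγ t ht) tendsto_const_nhds) (by simp [γ]) (by fun_prop)
    (fun t _ => ((hasDerivAt_id t).const_mul _).hasDerivWithinAt) (by simpa using hbound)
    (right_mem_Icc.2 zero_le_one)
  simpa [γ] using this

variable {ι : Type*} [Finite ι] {C : ι → Set E}

theorem lipschitzOnWith_iUnion_of_isClosed {K : ℝ≥0} {g : E → F} (hC : ∀ i, IsClosed (C i))
    (hconv : Convex ℝ (⋃ i, C i)) (hg : ∀ i, LipschitzOnWith K g (C i)) :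
    LipschitzOnWith K g (⋃ i, C i) := by
  refine lipschitzOnWith_of_eventually_dist_le hconv fun w _ => ?_
  have hmem : ∀ᶠ w' in 𝓝 w, ∀ i, w' ∈ C i → w ∈ C i := eventually_all.2 fun i => by
    by_cases hi : w ∈ C i
    · exact .of_forall fun _ _ => hi
    · filter_upwards [(hC i).isOpen_compl.mem_nhds hi] with w' hw' h
      exact absurd h hw'
  filter_upwards [nhdsWithin_le_nhds hmem, self_mem_nhdsWithin] with w' hw' hw'C
  obtain ⟨i, hi⟩ := mem_iUnion.1 hw'C
  exact (hg i).dist_le_mul w' hi w (hw' i hi)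

theorem exists_lipschitzWith_eqOn_of_isClosed {f : ι → E → ℝ} (hC : ∀ i, IsClosed (C i))
    (hconv : Convex ℝ (⋃ i, C i)) (hf : ∀ i, ∃ K, LipschitzOnWith K (f i) (C i))
    (hcompat : ∀ i j, ∀ w ∈ C i ∩ C j, f i w = f j w) :
    ∃ K, ∃ G : E → ℝ, LipschitzWith K G ∧ ∀ i, EqOn G (f i) (C i) := by
  classical
  have := Fintype.ofFinite ι
  choose K hK using hf
  let g : E → ℝ := fun w => if h : ∃ i, w ∈ C i then f h.choose w else 0
  have hgf : ∀ i, EqOn g (f i) (C i) := fun i w hw => by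
    have h : ∃ i, w ∈ C i := ⟨i, hw⟩
    simpa [g, h] using hcompat _ i w ⟨h.choose_spec, hw⟩
  have hg : LipschitzOnWith (∑ i, K i) g (⋃ i, C i) :=
    lipschitzOnWith_iUnion_of_isClosed hC hconv fun i x hx y hy => by
      rw [hgf i hx, hgf i hy]
      exact (hK i).weaken (Finset.single_le_sum (fun _ _ => zero_le) (Finset.mem_univ i)) hx hy
  obtain ⟨G, hG, hGg⟩ := hg.extend_real
  exact ⟨_, G, hG, fun i w hw => (hGg (mem_iUnion_of_mem i hw)).symm.trans (hgf i hw)⟩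

end Lipschitz

section NullSets

variable {E : Type*} [NormedAddCommGroup E] [NormedSpace ℝ E] [FiniteDimensional ℝ E]
  [MeasurableSpace E] [BorelSpace E] (ν : Measure E) [ν.IsAddHaarMeasure]

theorem ae_mem_interior_of_convex {ι : Type*} [Countable ι] {C : ι → Set E}
    (hC : ∀ i, Convex ℝ (C i)) : ∀ᵐ w ∂ν, ∀ i, w ∈ C i → w ∈ interior (C i) := by
  refine ae_all_iff.2 fun i => ?_
  filter_upwards [measure_eq_zero_iff_ae_notMem.1 ((hC i).addHaar_frontier ν)] with w hw hwC
  by_contra hwi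
  exact hw ⟨subset_closure hwC, hwi⟩

theorem ae_linearMap_ne {l : E →ₗ[ℝ] ℝ} (hl : l ≠ 0) (a : ℝ) : ∀ᵐ w ∂ν, l w ≠ a :=
  (ae_comp_linearMap_mem_iff l ν volume (LinearMap.surjective hl)
    (measurableSet_singleton a).compl).2 (Measure.ae_ne volume a)

variable {ν} in
theorem ae_add_left_of_absolutelyContinuous {μ : Measure E} (hμ : μ ≪ ν) {p : E → Prop}
    (hp : ∀ᵐ w ∂ν, p w) (a : E) : ∀ᵐ z ∂μ, p (a + z) :=
  hμ.ae_le ((quasiMeasurePreserving_add_left ν a).ae hp)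

end NullSets

section ParametricIntegral

theorem contDiffAt_max_of_ne {X : Type*} [NormedAddCommGroup X] [NormedSpace ℝ X] {f g : X → ℝ}
    {x : X} {n : WithTop ℕ∞}
    (hf : ContDiffAt ℝ n f x) (hg : ContDiffAt ℝ n g x) (hne : f x ≠ g x) :
    ContDiffAt ℝ n (fun x => max (f x) (g x)) x := by
  rcases hne.lt_or_gt with hlt | hgt
  · refine hg.congr_of_eventuallyEq ?_
    filter_upwards [hf.continuousAt.eventually_lt hg.continuousAt hlt] with x' hx'
    exact max_eq_right hx'.le
  · refine hf.congr_of_eventuallyEq ?_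
    filter_upwards [hg.continuousAt.eventually_lt hf.continuousAt hgt] with x' hx'
    exact max_eq_left hx'.le

variable {X E Z : Type*} [NormedAddCommGroup X] [NormedSpace ℝ X] [FiniteDimensional ℝ X]
  [NormedAddCommGroup E] [NormedSpace ℝ E] [MeasurableSpace Z] {μ : Measure Z}

theorem aestronglyMeasurable_of_hasFDerivAt {h : X → Z → E} {D : Z → X →L[ℝ] E} {x : X}
    (hmeas : ∀ᶠ x' in 𝓝 x, AEStronglyMeasurable (h x') μ)
    (hD : ∀ᵐ z ∂μ, HasFDerivAt (h · z) (D z) x) : AEStronglyMeasurable D μ := by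
  have hdir : ∀ v, AEStronglyMeasurable (fun z => D z v) μ := fun v => by
    have hline : Tendsto (fun t : ℝ => x + t • v) (𝓝[>] 0) (𝓝 x) := by
      have : Continuous fun t : ℝ => x + t • v := by fun_prop
      simpa using (this.tendsto 0).mono_left nhdsWithin_le_nhds
    obtain ⟨t, ht0, ht⟩ := exists_seq_forall_of_frequently (hline.eventually hmeas).frequently
    refine aestronglyMeasurable_of_tendsto_ae atTop
      (fun k => ((ht k).sub hmeas.self_of_nhds).const_smul (t k)⁻¹) ?_
    filter_upwards [hD] with z hz
    exact (hz.hasLineDerivAt v).tendsto_slope_zero_right.comp ht0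
  let b := Module.finBasis ℝ X
  have hsum : D = fun z => ∑ i, ContinuousLinearMap.smulRightL ℝ X E
      (b.coord i).toContinuousLinearMap (D z (b i)) := by
    ext z v
    conv_lhs => rw [← b.sum_repr v, map_sum]
    simp only [map_smul]
    simp
  rw [hsum]
  exact Finset.aestronglyMeasurable_fun_sum _ fun i _ =>
    (ContinuousLinearMap.continuous _).comp_aestronglyMeasurable (hdir (b i))

variable {U : Set X} {L : Z → ℝ≥0}

theorem contDiffAt_integral {h : X → Z → E} (hU : IsOpen U)
    (hint : ∀ x ∈ U, Integrable (h x) μ) (hL : Integrable (fun z => (L z : ℝ)) μ)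
    (hlip : ∀ᵐ z ∂μ, LipschitzOnWith (L z) (h · z) U)
    (hdiff : ∀ x ∈ U, ∀ᵐ z ∂μ, ContDiffAt ℝ 1 (h · z) x) {x₀ : X} (hx₀ : x₀ ∈ U) :
    ContDiffAt ℝ 1 (fun x => ∫ z, h x z ∂μ) x₀ := by
  let D : X → Z → X →L[ℝ] E := fun x z => fderiv ℝ (h · z) x
  have hD : ∀ x ∈ U, ∀ᵐ z ∂μ, HasFDerivAt (h · z) (D x z) x := fun x hx =>
    (hdiff x hx).mono fun z hz => (hz.differentiableAt one_ne_zero).hasFDerivAt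
  have hhmeas : ∀ x ∈ U, ∀ᶠ x' in 𝓝 x, AEStronglyMeasurable (h x') μ := fun x hx =>
    mem_of_superset (hU.mem_nhds hx) fun x' hx' => (hint x' hx').aestronglyMeasurable
  have hDmeas : ∀ x ∈ U, AEStronglyMeasurable (D x) μ := fun x hx =>
    aestronglyMeasurable_of_hasFDerivAt (hhmeas x hx) (hD x hx)
  have hderiv : ∀ x ∈ U, HasFDerivAt (fun x => ∫ z, h x z ∂μ) (∫ z, D x z ∂μ) x := fun x hx =>
    (hasFDerivAt_integral_of_dominated_loc_of_lip (hU.mem_nhds hx) (hhmeas x hx) (hint x hx)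
      (hDmeas x hx) (by simpa using hlip) hL (hD x hx)).2
  refine contDiffAt_one_iff.2 ⟨fun x => ∫ z, D x z ∂μ, U, hU.mem_nhds hx₀, fun x hx => ?_, hderiv⟩
  refine tendsto_integral_filter_of_dominated_convergence (fun z => (L z : ℝ)) ?_ ?_ hL ?_
  · exact eventually_mem_nhdsWithin.mono hDmeas
  · filter_upwards [self_mem_nhdsWithin] with x' hx'
    exact hlip.mono fun z hz => norm_fderiv_le_of_lipschitzOn ℝ (hU.mem_nhds hx') hz
  · filter_upwards [hdiff x hx] with z hz
    exact (hz.fderiv_right (m := 0) (by norm_num)).continuousAt.tendsto.mono_left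
      nhdsWithin_le_nhds

theorem contDiffAt_integral_max_sub [IsFiniteMeasure μ] {h : X → Z → ℝ} {g : X → ℝ}
    (hU : IsOpen U) (hint : ∀ x ∈ U, Integrable (h x) μ) (hL : Integrable (fun z => (L z : ℝ)) μ)
    (hlip : ∀ᵐ z ∂μ, LipschitzOnWith (L z) (h · z) U)
    (hdiff : ∀ x ∈ U, ∀ᵐ z ∂μ, ContDiffAt ℝ 1 (h · z) x)
    (hg : ∀ x ∈ U, ContDiffAt ℝ 1 g x) (hne : ∀ x ∈ U, ∀ᵐ z ∂μ, h x z ≠ g x)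
    {x₀ : X} (hx₀ : x₀ ∈ U) :
    ContDiffAt ℝ 1 (fun x => ∫ z, max (h x z - g x) 0 ∂μ) x₀ := by
  obtain ⟨K, W, hW, hKW⟩ := (hg x₀ hx₀).exists_lipschitzOnWith
  refine contDiffAt_integral (L := fun z => L z + K) (hU.inter isOpen_interior)
    (fun x hx => ((hint x hx.1).sub (integrable_const (g x))).pos_part)
    (by simpa using hL.add (integrable_const (K : ℝ))) ?_ (fun x hx => ?_)
    ⟨hx₀, mem_interior_iff_mem_nhds.2 hW⟩
  · filter_upwards [hlip] with z hz
    have hsub := (hz.mono inter_subset_left).sub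
      (hKW.mono (inter_subset_right.trans interior_subset))
    simpa [Function.comp_def] using (LipschitzWith.id.max_const 0).comp_lipschitzOnWith hsub
  · filter_upwards [hdiff x hx.1, hne x hx.1] with z hz hzne
    exact contDiffAt_max_of_ne (hz.sub (hg x hx.1)) contDiffAt_const (sub_ne_zero.2 hzne)

end ParametricIntegral

section OptimalValue

variable {ι E V : Type*} [Fintype ι] [AddCommGroup E] [Module ℝ E] [AddCommGroup V]
  [LinearOrder V] [IsOrderedAddMonoid V] [Module ℝ V] [PosSMulMono ℝ V]
  {A : E →ₗ[ℝ] ι → ℝ} {ℓ : E →ₗ[ℝ] V}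

theorem exists_lipschitzWith_eq_optimalValue (hℓ : ∀ v, A v ≤ 0 → 0 ≤ ℓ v) (p : V →ₗ[ℝ] ℝ) :
    ∃ L, ∃ G : (ι → ℝ) → ℝ, LipschitzWith L G ∧ ∀ w y, IsLPSolution A ℓ w y → G w = p (ℓ y) := by
  have hcover : ⋃ B, optimalRegion A ℓ B = {w | ∃ y, A y ≤ w} := by
    ext w
    rw [mem_iUnion]
    exact ⟨fun ⟨B, hB⟩ => ⟨_, (isLPSolution_basicSolution hB).1⟩, exists_mem_optimalRegion hℓ⟩
  obtain ⟨L, G, hL, hG⟩ := exists_lipschitzWith_eqOn_of_isClosed (C := optimalRegion A ℓ)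
    (f := fun B => p ∘ₗ ℓ ∘ₗ basicSolution A B) (fun _ => isClosed_optimalRegion)
    (hcover ▸ convex_setOf_feasible)
    (fun B => ⟨_, (p ∘ₗ ℓ ∘ₗ basicSolution A B).toContinuousLinearMap.lipschitz.lipschitzOnWith⟩)
    (fun B B' w hw => congrArg p
      ((isLPSolution_basicSolution hw.1).map_eq (isLPSolution_basicSolution hw.2)))
  refine ⟨L, G, hL, fun w y hy => ?_⟩
  obtain ⟨B, hB⟩ := exists_mem_optimalRegion hℓ ⟨y, hy.1⟩
  exact (hG B hB).trans (congrArg p ((isLPSolution_basicSolution hB).map_eq hy))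

theorem ae_exists_mem_interior_optimalRegion (hℓ : ∀ v, A v ≤ 0 → 0 ≤ ℓ v) :
    ∀ᵐ w, (∃ y, A y ≤ w) → ∃ B, w ∈ interior (optimalRegion A ℓ B) := by
  filter_upwards [ae_mem_interior_of_convex volume fun B : Set ι =>
    convex_optimalRegion (A := A) (ℓ := ℓ) (B := B)] with w hw hfeas
  exact (exists_mem_optimalRegion hℓ hfeas).imp hw

variable {p : V →ₗ[ℝ] ℝ} {G : (ι → ℝ) → ℝ}

theorem ae_contDiffAt_optimalValue (hG : ∀ w y, IsLPSolution A ℓ w y → G w = p (ℓ y))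
    (hℓ : ∀ v, A v ≤ 0 → 0 ≤ ℓ v) (n : WithTop ℕ∞) :
    ∀ᵐ w, (∃ y, A y ≤ w) → ContDiffAt ℝ n G w := by
  filter_upwards [ae_exists_mem_interior_optimalRegion hℓ] with w hw hfeas
  obtain ⟨B, hB⟩ := hw hfeas
  let f := (p ∘ₗ ℓ ∘ₗ basicSolution A B).toContinuousLinearMap
  refine f.contDiff.contDiffAt.congr_of_eventuallyEq ?_
  filter_upwards [mem_interior_iff_mem_nhds.1 hB] with w' hw'
  exact hG w' _ (isLPSolution_basicSolution hw')

theorem ae_optimalValue_ne (hG : ∀ w y, IsLPSolution A ℓ w y → G w = p (ℓ y))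
    (hℓ : ∀ v, A v ≤ 0 → 0 ≤ ℓ v) (hp : p ∘ₗ ℓ ≠ 0) (a : ℝ) :
    ∀ᵐ w, (∃ y, A y ≤ w) → G w ≠ a := by
  have hne : ∀ B : Set ι, (interior (optimalRegion A ℓ B)).Nonempty →
      p ∘ₗ ℓ ∘ₗ basicSolution A B ≠ 0 := fun B ⟨w, hw⟩ h0 =>
    hp <| LinearMap.ext fun v => by
      rw [LinearMap.comp_apply, ← map_basicSolution_map_of_mem_interior hw v]
      exact LinearMap.congr_fun h0 (A v)
  have hlevel : ∀ᵐ w, ∀ B, (interior (optimalRegion A ℓ B)).Nonempty →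
      (p ∘ₗ ℓ ∘ₗ basicSolution A B) w ≠ a :=
    ae_all_iff.2 fun B => eventually_all.2 fun hB => ae_linearMap_ne volume (hne B hB) a
  filter_upwards [ae_exists_mem_interior_optimalRegion hℓ, hlevel] with w hw hlevel hfeas
  obtain ⟨B, hB⟩ := hw hfeas
  rw [hG w _ (isLPSolution_basicSolution (interior_subset hB))]
  exact hlevel B ⟨w, hB⟩

end OptimalValue

section MeanUpperSemideviation

variable {Z : Type*} [MeasurableSpace Z] {μ : Measure Z} {ρ : ℝ}

variable (μ ρ) in
/-- The mean upper semideviation risk measure of order one, with weight `ρ` on the mean excess of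
`Y` over its expectation. -/
def meanUpperSemideviation (Y : Z → ℝ) : ℝ :=
  ∫ z, Y z ∂μ + ρ * ∫ z, max (Y z - ∫ z', Y z' ∂μ) 0 ∂μ

theorem meanUpperSemideviation_congr_ae {Y Y' : Z → ℝ} (h : Y =ᵐ[μ] Y') :
    meanUpperSemideviation μ ρ Y = meanUpperSemideviation μ ρ Y' := by
  have hmax : ∫ z, max (Y z - ∫ z', Y' z' ∂μ) 0 ∂μ = ∫ z, max (Y' z - ∫ z', Y' z' ∂μ) 0 ∂μ :=
    integral_congr_ae (h.mono fun z hz => by simp only [hz])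
  simp only [meanUpperSemideviation, integral_congr_ae h, hmax]

theorem meanUpperSemideviation_const [IsProbabilityMeasure μ] (a : ℝ) :
    meanUpperSemideviation μ ρ (fun _ => a) = a := by
  simp [meanUpperSemideviation]

theorem contDiffAt_meanUpperSemideviation [IsFiniteMeasure μ] {X : Type*} [NormedAddCommGroup X]
    [NormedSpace ℝ X] [FiniteDimensional ℝ X] {U : Set X} {L : Z → ℝ≥0} {h : X → Z → ℝ}
    (hU : IsOpen U) (hint : ∀ x ∈ U, Integrable (h x) μ) (hL : Integrable (fun z => (L z : ℝ)) μ)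
    (hlip : ∀ᵐ z ∂μ, LipschitzOnWith (L z) (h · z) U)
    (hdiff : ∀ x ∈ U, ∀ᵐ z ∂μ, ContDiffAt ℝ 1 (h · z) x)
    (hne : ∀ x ∈ U, ∀ᵐ z ∂μ, h x z ≠ ∫ z', h x z' ∂μ) {x₀ : X} (hx₀ : x₀ ∈ U) :
    ContDiffAt ℝ 1 (fun x => meanUpperSemideviation μ ρ (h x)) x₀ := by
  have hmean := fun x => contDiffAt_integral (x₀ := x) hU hint hL hlip hdiff
  exact (hmean x₀ hx₀).add
    (contDiffAt_const.mul (contDiffAt_integral_max_sub hU hint hL hlip hdiff hmean hne hx₀))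

end MeanUpperSemideviation

section RandomRecourse

theorem integrable_comp_of_lipschitzWith {Z W : Type*} [MeasurableSpace Z] {μ : Measure Z}
    [IsFiniteMeasure μ] [NormedAddCommGroup W] {G : W → ℝ} {L : ℝ≥0} (hG : LipschitzWith L G)
    {Y : Z → W} (hY : Integrable Y μ) : Integrable (fun z => G (Y z)) μ := by
  refine ((hY.norm.const_mul L).add (integrable_const ‖G 0‖)).mono'
    (hG.continuous.comp_aestronglyMeasurable hY.aestronglyMeasurable) (.of_forall fun z => ?_)
  calc ‖G (Y z)‖ ≤ ‖G (Y z) - G 0‖ + ‖G 0‖ := norm_le_norm_sub_add _ _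
    _ ≤ L * ‖Y z‖ + ‖G 0‖ := by simpa using hG.norm_sub_le (Y z) 0

variable {X W : Type*} [NormedAddCommGroup X] [NormedSpace ℝ X] [NormedAddCommGroup W]
  [NormedSpace ℝ W] {G : W → ℝ} (c : X →L[ℝ] ℝ) (T : X →L[ℝ] W)

theorem exists_lipschitzWith_add_comp_continuousLinearMap {L : ℝ≥0} (hG : LipschitzWith L G) :
    ∃ K, ∀ z, LipschitzWith K fun x => c x + G (T x + z) :=
  ⟨_, fun z => c.lipschitz.add (hG.comp (T.lipschitz.add (.const z)))⟩

theorem contDiffAt_add_comp_continuousLinearMap {n : WithTop ℕ∞} {x : X} {z : W}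
    (hG : ContDiffAt ℝ n G (T x + z)) : ContDiffAt ℝ n (fun x => c x + G (T x + z)) x :=
  c.contDiff.contDiffAt.add (hG.comp x (T.contDiff.add contDiff_const).contDiffAt)

theorem contDiffAt_meanUpperSemideviation_add_comp_continuousLinearMap [FiniteDimensional ℝ X]
    [MeasurableSpace W] {μ : Measure W} [IsFiniteMeasure μ] {ρ : ℝ} {L : ℝ≥0}
    (hG : LipschitzWith L G) (hμ : Integrable (fun z => z) μ) {U : Set X} (hU : IsOpen U)
    (hdiff : ∀ x ∈ U, ∀ᵐ z ∂μ, ContDiffAt ℝ 1 G (T x + z))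
    (hlevel : ∀ x ∈ U, ∀ a, ∀ᵐ z ∂μ, G (T x + z) ≠ a) {x₀ : X} (hx₀ : x₀ ∈ U) :
    ContDiffAt ℝ 1 (fun x => meanUpperSemideviation μ ρ fun z => c x + G (T x + z)) x₀ := by
  obtain ⟨K, hK⟩ := exists_lipschitzWith_add_comp_continuousLinearMap c T hG
  refine contDiffAt_meanUpperSemideviation hU (L := fun _ => K) (fun x _ => ?_)
    (integrable_const _) (.of_forall fun z => (hK z).lipschitzOnWith) (fun x hx => ?_)
    (fun x hx => ?_) hx₀
  · exact (integrable_const _).add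
      (integrable_comp_of_lipschitzWith hG ((integrable_const _).add hμ))
  · exact (hdiff x hx).mono fun z hz => contDiffAt_add_comp_continuousLinearMap c T hz
  · exact (hlevel x hx _).mono fun z hz hne => hz (eq_sub_of_add_eq' hne)

end RandomRecourse

section Bilevel

variable {n m s : ℕ} {c : Fin n → ℝ} {q d : Fin m → ℝ} {A : Matrix (Fin s) (Fin m) ℝ}
  {T : Matrix (Fin s) (Fin n) ℝ}

theorem Psi_eq_setOf_isLPSolution (x : Fin n → ℝ) (z : Fin s → ℝ) :
    Psi d A T x z = {y | IsLPSolution A.mulVecLin (dotProductBilin ℝ ℝ d) (T *ᵥ x + z) y} :=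
  rfl

theorem fE_eq_of_isLeast {x : Fin n → ℝ} {z : Fin s → ℝ} {r : ℝ}
    (h : IsLeast (dotProductBilin ℝ ℝ q '' Psi d A T x z) r) :
    fE c q d A T x z = ((c ⬝ᵥ x + r : ℝ) : EReal) := by
  have := (EReal.coe_strictMono.monotone.map_isLeast h).isGLB.sInf_eq
  rw [image_image] at this
  rw [EReal.coe_add, ← this]
  rfl

theorem Psi_nonempty_of_fE_ne_top {x : Fin n → ℝ} {z : Fin s → ℝ} (h : fE c q d A T x z ≠ ⊤) :
    (Psi d A T x z).Nonempty := by
  contrapose! h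
  simp [fE, h]

theorem bddBelow_of_fE_ne_bot {x : Fin n → ℝ} {z : Fin s → ℝ} (h : fE c q d A T x z ≠ ⊥) :
    BddBelow (dotProductBilin ℝ ℝ q '' Psi d A T x z) := by
  contrapose! h
  have : sInf ((fun y => ((q ⬝ᵥ y : ℝ) : EReal)) '' Psi d A T x z) = ⊥ := by
    refine (EReal.eq_bot_iff_forall_lt _).2 fun r => ?_
    obtain ⟨_, ⟨y, hy, rfl⟩, hlt⟩ := not_bddBelow_iff.1 h r
    exact sInf_lt_iff.2 ⟨_, ⟨y, hy, rfl⟩, EReal.coe_lt_coe_iff.2 hlt⟩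
  simp [fE, this]

theorem lexObjective_nonneg_of_domf_nonempty (hdom : (domf c q d A T).Nonempty) {v : Fin m → ℝ}
    (hv : A.mulVecLin v ≤ 0) :
    0 ≤ lexObjective (dotProductBilin ℝ ℝ d) (dotProductBilin ℝ ℝ q) v := by
  obtain ⟨⟨x, z⟩, htop, hbot⟩ := hdom
  obtain ⟨y, hy⟩ := Psi_nonempty_of_fE_ne_top htop
  rw [Psi_eq_setOf_isLPSolution] at hy
  exact lexObjective_nonneg_of_bddBelow hy (bddBelow_of_fE_ne_bot hbot) hv

theorem toReal_fE_eq (hdom : (domf c q d A T).Nonempty) {G : (Fin s → ℝ) → ℝ}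
    (hG : ∀ w y, IsLPSolution A.mulVecLin
      (lexObjective (dotProductBilin ℝ ℝ d) (dotProductBilin ℝ ℝ q)) w y → G w = q ⬝ᵥ y)
    {x : Fin n → ℝ} {z : Fin s → ℝ} (hxz : (x, z) ∈ Pfeas A T) :
    (fE c q d A T x z).toReal = c ⬝ᵥ x + G (T *ᵥ x + z) := by
  obtain ⟨B, hB⟩ :=
    exists_mem_optimalRegion (fun _ => lexObjective_nonneg_of_domf_nonempty hdom) hxz
  have hsol := isLPSolution_basicSolution hB
  rw [fE_eq_of_isLeast hsol.isLeast_of_lexObjective, EReal.toReal_coe, hG _ _ hsol]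
  rfl

theorem exists_lipschitzWith_toReal_fE_eq (hdom : (domf c q d A T).Nonempty) :
    ∃ L, ∃ G : (Fin s → ℝ) → ℝ, LipschitzWith L G ∧
      (∀ x z, (x, z) ∈ Pfeas A T → (fE c q d A T x z).toReal = c ⬝ᵥ x + G (T *ᵥ x + z)) ∧
      (∀ᵐ w, (∃ y, A *ᵥ y ≤ w) → ContDiffAt ℝ 1 G w) ∧
      (G = 0 ∨ ∀ a, ∀ᵐ w, (∃ y, A *ᵥ y ≤ w) → G w ≠ a) := by
  by_cases hq : q = 0
  · exact ⟨0, 0, .const 0, fun _ _ => toReal_fE_eq hdom (by simp [hq]),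
      .of_forall fun _ _ => contDiffAt_const, .inl rfl⟩
  let ℓ := lexObjective (dotProductBilin ℝ ℝ d) (dotProductBilin ℝ ℝ q)
  let p : ℝ ×ₗ ℝ →ₗ[ℝ] ℝ := LinearMap.snd ℝ ℝ ℝ ∘ₗ (toLexLinearEquiv ℝ (ℝ × ℝ)).symm.toLinearMap
  have hℓ : ∀ v, A.mulVecLin v ≤ 0 → 0 ≤ ℓ v := fun _ => lexObjective_nonneg_of_domf_nonempty hdom
  have hp : p ∘ₗ ℓ ≠ 0 := fun h => hq <| dotProduct_eq_zero _ fun y => LinearMap.congr_fun h y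
  obtain ⟨L, G, hL, hG⟩ := exists_lipschitzWith_eq_optimalValue hℓ p
  exact ⟨L, G, hL, fun _ _ => toReal_fE_eq hdom hG, ae_contDiffAt_optimalValue hG hℓ 1,
    .inr (ae_optimalValue_ne hG hℓ hp)⟩

theorem ae_mem_msupport (μ : Measure (Fin s → ℝ)) : ∀ᵐ z ∂μ, z ∈ msupport μ := by
  filter_upwards [μ.support_mem_ae] with z hz U hU hzU
  exact (((nhds_basis_opens z).mem_measureSupport.1 hz) U ⟨hzU, hU⟩).ne'

theorem ae_mem_Pfeas {μ : Measure (Fin s → ℝ)} {x : Fin n → ℝ} (hx : x ∈ PZSet A T μ) :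
    ∀ᵐ z ∂μ, (x, z) ∈ Pfeas A T :=
  (ae_mem_msupport μ).mono hx

theorem ae_mulVec_add_of_mem_PZSet {μ : Measure (Fin s → ℝ)} (hμ : μ ≪ volume) {x : Fin n → ℝ}
    (hx : x ∈ PZSet A T μ) {p : (Fin s → ℝ) → Prop} (hp : ∀ᵐ w, (∃ y, A *ᵥ y ≤ w) → p w) :
    ∀ᵐ z ∂μ, p (T *ᵥ x + z) := by
  filter_upwards [ae_add_left_of_absolutelyContinuous hμ hp (T *ᵥ x), ae_mem_Pfeas hx]
    with z hz hxz
  exact hz hxz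

end Bilevel

theorem meanUpperSemideviation_contDiff_general {n m s : ℕ}
    (c : Fin n → ℝ) (q d : Fin m → ℝ)
    (A : Matrix (Fin s) (Fin m) ℝ) (T : Matrix (Fin s) (Fin n) ℝ)
    (μZ : Measure (Fin s → ℝ)) [IsProbabilityMeasure μZ]
    (hdom : (domf c q d A T).Nonempty)
    (hmom : ∫⁻ z, ‖z‖₊ ∂μZ < ⊤)
    (habs : μZ ≪ (volume : Measure (Fin s → ℝ)))
    (ρ : ℝ)
    (QE QSD : (Fin n → ℝ) → ℝ)
    (hQE : ∀ x, QE x = ∫ z, (fE c q d A T x z).toReal ∂μZ)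
    (hQSD : ∀ x, QSD x = QE x + ρ * ∫ z, max ((fE c q d A T x z).toReal - QE x) 0 ∂μZ) :
    ∀ x₀ ∈ interior (PZSet A T μZ), ContDiffAt ℝ 1 QSD x₀ := by
  intro x₀ hx₀
  obtain ⟨L, G, hL, hGval, hGdiff, hGlevel⟩ := exists_lipschitzWith_toReal_fE_eq hdom
  have hQSD_eq : QSD =ᶠ[𝓝 x₀] fun x =>
      meanUpperSemideviation μZ ρ fun z => c ⬝ᵥ x + G (T *ᵥ x + z) := by
    filter_upwards [mem_interior_iff_mem_nhds.1 hx₀] with x hx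
    rw [hQSD, hQE]
    exact meanUpperSemideviation_congr_ae ((ae_mem_Pfeas hx).mono fun z => hGval x z)
  refine ContDiffAt.congr_of_eventuallyEq ?_ hQSD_eq
  rcases hGlevel with rfl | hGlevel
  · simp only [Pi.zero_apply, meanUpperSemideviation_const]
    exact ((dotProductBilin ℝ ℝ c).toContinuousLinearMap.contDiff.add contDiff_const).contDiffAt
  · exact contDiffAt_meanUpperSemideviation_add_comp_continuousLinearMap
      (dotProductBilin ℝ ℝ c).toContinuousLinearMap T.mulVecLin.toContinuousLinearMap hL
      ⟨aestronglyMeasurable_id, hmom⟩ isOpen_interior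
      (fun x hx => ae_mulVec_add_of_mem_PZSet habs (interior_subset hx) hGdiff)
      (fun x hx a => ae_mulVec_add_of_mem_PZSet habs (interior_subset hx) (hGlevel a)) hx₀

theorem meanUpperSemideviation_contDiff {n m s : ℕ}
    (c : Fin n → ℝ) (q d : Fin m → ℝ)
    (A : Matrix (Fin s) (Fin m) ℝ) (T : Matrix (Fin s) (Fin n) ℝ)
    (μZ : Measure (Fin s → ℝ)) [IsProbabilityMeasure μZ]
    (hdom : (domf c q d A T).Nonempty)
    (hmom : ∫⁻ z, ‖z‖₊ ∂μZ < ⊤)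
    (habs : μZ ≪ (volume : Measure (Fin s → ℝ)))
    (ρ : ℝ) (hρ : ρ ∈ Set.Ico (0 : ℝ) 1)
    (QE QSD : (Fin n → ℝ) → ℝ)
    (hQE : ∀ x, QE x = ∫ z, (fE c q d A T x z).toReal ∂μZ)
    (hQSD : ∀ x, QSD x = QE x + ρ * ∫ z, max ((fE c q d A T x z).toReal - QE x) 0 ∂μZ) :
    ∀ x₀ ∈ interior (PZSet A T μZ), QE x₀ ≠ 0 → ContDiffAt ℝ 1 QSD x₀ :=
  fun x₀ hx₀ _ => meanUpperSemideviation_contDiff_general c q d A T μZ hdom hmom habs ρ QE QSD hQE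
    hQSD x₀ hx₀

end
end

section
/- P = ℝⁿ × ℝˢ, i.e. for every x ∈ ℝⁿ and z ∈ ℝˢ the system Ay ≤ Tx + z has a solution y ∈ ℝᵐ, holds if and only if u = 0 is the only vector u ∈ ℝˢ with u ≥ 0 (componentwise) satisfying Aᵀu = 0. -/
open MeasureTheory Matrix Set Topology Filter
open scoped ENNReal NNReal

noncomputable section

/-!
Since `z` ranges over the whole space, `P` is everything iff `A y ≤ b` is solvable for every `b`,
and by scaling a solution this amounts to solvability of the strict system `A y < 0`. Gordan's
theorem characterizes the latter: if no nonzero `u ≥ 0` is a linear dependence of the rows of `A`,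
then `0` lies outside the convex hull of the rows, and a hyperplane separating it from this
compact convex set has such a `y` as normal vector.
-/

theorem eq_zero_of_sum_smul_eq_zero_of_linearMap_neg {K ι E : Type*} [Ring K] [LinearOrder K]
    [IsStrictOrderedRing K] [Fintype ι] [AddCommMonoid E] [Module K E] {v : ι → E} {f : E →ₗ[K] K}
    (hf : ∀ i, f (v i) < 0) {u : ι → K} (hu : 0 ≤ u) (huv : ∑ i, u i • v i = 0) : u = 0 := by
  have hsum : ∑ i, u i * f (v i) = 0 := by
    simpa only [map_sum, map_smul, smul_eq_mul, map_zero] using congrArg f huv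
  have hterm : ∀ i ∈ Finset.univ, u i * f (v i) = 0 :=
    (Finset.sum_eq_zero_iff_of_nonpos fun i _ =>
      mul_nonpos_of_nonneg_of_nonpos (hu i) (hf i).le).mp hsum
  funext i
  exact (mul_eq_zero.mp (hterm i (Finset.mem_univ i))).resolve_right (hf i).ne

theorem convexHull_range_eq_image_stdSimplex {K ι E : Type*} [Field K] [LinearOrder K]
    [IsStrictOrderedRing K] [Fintype ι] [AddCommGroup E] [Module K E] (v : ι → E) :
    convexHull K (range v) = Fintype.linearCombination K v '' stdSimplex K ι := by
  classical
  rw [← convexHull_rangle_single_eq_stdSimplex, LinearMap.image_convexHull, ← range_comp]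
  simp only [Function.comp_def, Fintype.linearCombination_apply_single, one_smul]

section Gordan

variable {E : Type*} [AddCommGroup E] [Module ℝ E] [TopologicalSpace E]
  [IsTopologicalAddGroup E] [ContinuousSMul ℝ E] [LocallyConvexSpace ℝ E]

theorem exists_strongDual_neg_of_zero_notMem_convexHull {S : Set E}
    (hS : IsClosed (convexHull ℝ S)) (h0 : 0 ∉ convexHull ℝ S) :
    ∃ f : StrongDual ℝ E, ∀ x ∈ S, f x < 0 := by
  obtain ⟨f, c, hfc, hc⟩ := geometric_hahn_banach_closed_point (convex_convexHull ℝ S) hS h0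
  rw [map_zero] at hc
  exact ⟨f, fun x hx => (hfc x (subset_convexHull ℝ S hx)).trans hc⟩

theorem exists_strongDual_neg_iff [T2Space E] {ι : Type*} [Fintype ι] (v : ι → E) :
    (∃ f : StrongDual ℝ E, ∀ i, f (v i) < 0) ↔
      ∀ u : ι → ℝ, 0 ≤ u → ∑ i, u i • v i = 0 → u = 0 := by
  constructor
  · rintro ⟨f, hf⟩ u
    exact eq_zero_of_sum_smul_eq_zero_of_linearMap_neg (f := f.toLinearMap) hf
  · intro h
    have h0 : 0 ∉ convexHull ℝ (range v) := by
      rw [convexHull_range_eq_image_stdSimplex]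
      rintro ⟨u, ⟨hu, hsum⟩, huv⟩
      have hu0 : u = 0 := h u hu huv
      simp [hu0] at hsum
    obtain ⟨f, hf⟩ := exists_strongDual_neg_of_zero_notMem_convexHull
      ((finite_range v).isClosed_convexHull ℝ) h0
    exact ⟨f, fun i => hf (v i) (mem_range_self i)⟩

end Gordan

theorem exists_mulVec_neg_iff {m n : Type*} [Fintype m] [Fintype n] (A : Matrix m n ℝ) :
    (∃ y, ∀ i, (A *ᵥ y) i < 0) ↔ ∀ u : m → ℝ, 0 ≤ u → Aᵀ *ᵥ u = 0 → u = 0 := by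
  classical
  let e : (n → ℝ) ≃ₗ[ℝ] StrongDual ℝ (n → ℝ) :=
    dotProductEquiv ℝ n ≪≫ₗ LinearMap.toContinuousLinearMap
  have he (y : n → ℝ) (i : m) : e y (A i) = (A *ᵥ y) i := dotProduct_comm y (A i)
  have hrows (u : m → ℝ) : Aᵀ *ᵥ u = ∑ i, u i • A i := by
    rw [mulVec_transpose, vecMul_eq_sum]
  simpa only [e.surjective.exists, he, hrows] using exists_strongDual_neg_iff A

section Scaling

variable {K : Type*} [Field K] [LinearOrder K] [IsStrictOrderedRing K]

theorem exists_smul_le_of_neg {ι : Type*} [Finite ι] {w : ι → K} (hw : ∀ i, w i < 0)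
    (b : ι → K) : ∃ t : K, t • w ≤ b := by
  have hcoord (i : ι) : ∀ᶠ t : K in atTop, t * w i ≤ b i :=
    (tendsto_id.atTop_mul_const_of_neg (hw i)).eventually_le_atBot (b i)
  exact (eventually_all.mpr hcoord).exists

theorem forall_exists_mulVec_le_iff {m n : Type*} [Finite m] [Fintype n] (A : Matrix m n K) :
    (∀ b, ∃ y, A *ᵥ y ≤ b) ↔ ∃ y, ∀ i, (A *ᵥ y) i < 0 := by
  constructor
  · intro h
    obtain ⟨y, hy⟩ := h (-1)
    exact ⟨y, fun i => (hy i).trans_lt neg_one_lt_zero⟩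
  · rintro ⟨y, hy⟩ b
    obtain ⟨t, ht⟩ := exists_smul_le_of_neg hy b
    exact ⟨t • y, (mulVec_smul A t y).trans_le ht⟩

end Scaling

theorem Pfeas_eq_univ_iff_forall_exists_mulVec_le {n m s : ℕ}
    (A : Matrix (Fin s) (Fin m) ℝ) (T : Matrix (Fin s) (Fin n) ℝ) :
    Pfeas A T = Set.univ ↔ ∀ b, ∃ y, A *ᵥ y ≤ b := by
  rw [Set.eq_univ_iff_forall]
  constructor
  · intro h b
    obtain ⟨y, hy : A *ᵥ y ≤ T *ᵥ 0 + b⟩ := h (0, b)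
    exact ⟨y, by simpa only [mulVec_zero, zero_add] using hy⟩
  · rintro h ⟨x, z⟩
    exact h (T *ᵥ x + z)

theorem Pfeas_eq_univ_iff {n m s : ℕ}
    (A : Matrix (Fin s) (Fin m) ℝ) (T : Matrix (Fin s) (Fin n) ℝ) :
    Pfeas A T = Set.univ ↔
      ∀ u : Fin s → ℝ, 0 ≤ u → Aᵀ.mulVec u = 0 → u = 0 := by
  rw [Pfeas_eq_univ_iff_forall_exists_mulVec_le, forall_exists_mulVec_le_iff,
    exists_mulVec_neg_iff]

end
end
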